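/- Let d ≥ 6 be an integer, let ε ∈ (0,1), and set p = (4d+3)/7, q = (4d+3)/4 − ε, r = (4d+3)/3 − ε. Then for every C > 0 there is a constant A > 0 (depending only on d, ε, C) such that for every nonnegative measurable function f on ℝ^d one has ‖T[f]‖_{L^q(L^r),K} ≤ A ‖f‖_{L^p(ℝ^d)}. -/

import Mathlib

open MeasureTheory ENNReal

noncomputable section

/-- `ℝ^n` with the Euclidean structure. We model `ℝ^d` as `Euc (d-1) × ℝ`,
identifying `ℝ^{d-1}` with the hyperplane `H = span(e_1,…,e_{d-1})` and the last
coordinate with the `e_d` direction. -/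
abbrev Euc (n : ℕ) := EuclideanSpace ℝ (Fin n)

/-- The local x-ray transform: `T[f](ξ,x) = ∫_0^1 f (x + t(ξ + e_d)) dt`. -/
def xrayT {n : ℕ} (f : Euc n × ℝ → ℝ≥0∞) (ξ x : Euc n) : ℝ≥0∞ :=
  ∫⁻ t in Set.Ioc (0:ℝ) 1, f (x + t • ξ, t)

/-- The Kakeya-order mixed norm `‖T[f]‖_{L^q(L^r),K}`. -/
def kakeyaMixedNorm {n : ℕ} (q r C : ℝ) (f : Euc n × ℝ → ℝ≥0∞) : ℝ≥0∞ :=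
  (∫⁻ ξ in Metric.ball (0 : Euc n) C, (∫⁻ x, xrayT f ξ x ^ r) ^ (q / r)) ^ (1 / q)

/-- `‖f‖_{L^p}` for a nonnegative (extended-real-valued) function. -/
def lpNorm {α : Type*} [MeasureSpace α] (p : ℝ) (f : α → ℝ≥0∞) : ℝ≥0∞ :=
  (∫⁻ z, f z ^ p) ^ (1 / p)

open Module Set

/-!
Lines are pairs `(ξ, x)` of a direction and a starting point. Let `G` be a set of lines, each of
which meets a set `E` for a time at least `l`. Two applications of Cauchy–Schwarz bound `|G|⁴` by
the number of quadrilaterals `PAQB` of points of `E` whose sides lie on lines of `G`. Three times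
`t`, `s`, `u` and a parameter `ρ` yield points `D₁`, `D₂` of `E` on two of the sides such that
`D₁`, `D₂` and the direction of a third side determine the position of the fourth line at a further
time, so the quadrilaterals are counted by an affine change of variables, at the cost of one factor
`M`, the largest measure of the set of lines of `G` with a given direction. A one-dimensional
inequality provides many admissible `(t, ρ, s, u)` on each line, with a weight that absorbs the
Jacobian; this needs `d - 1 ≥ 4`. Once the time slices of `E` that are too large have been removed,
the outcome is `|G|⁴ l ^ (4 (d - 1) + 7 + η) ≲ M |E|⁷` for every `η > 0`. Interpolating it with
trivial bounds and summing over dyadic values of `l`, of the measure of the set of lines in a given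
direction and of the height of `f` gives strong-type bounds in an open range of exponents.
-/

/-! ### Lebesgue integrals -/

theorem ofReal_abs_pow_finrank_mul_lintegral_comp_smul_add {V : Type*} [NormedAddCommGroup V]
    [NormedSpace ℝ V] [MeasurableSpace V] [BorelSpace V] [FiniteDimensional ℝ V]
    (μ : Measure V) [μ.IsAddHaarMeasure] (f : V → ℝ≥0∞) {a : ℝ} (ha : a ≠ 0) (b : V) :
    ENNReal.ofReal (|a| ^ finrank ℝ V) * ∫⁻ x, f (a • x + b) ∂μ = ∫⁻ x, f x ∂μ := by
  have hmap : ∫⁻ x, f (a • x + b) ∂μ = ∫⁻ y, f (y + b) ∂μ.map (a • ·) :=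
    ((Homeomorph.smulOfNeZero a ha).toMeasurableEquiv.measurableEmbedding.lintegral_map
      fun y ↦ f (y + b)).symm
  rw [hmap, Measure.map_addHaar_smul μ ha, lintegral_smul_measure, lintegral_add_right_eq_self,
    smul_eq_mul, ← mul_assoc, ← ENNReal.ofReal_mul (by positivity), abs_inv, abs_pow,
    mul_inv_cancel₀ (by positivity), ENNReal.ofReal_one, one_mul]

theorem sq_lintegral_le_measure_mul_lintegral_sq {α : Type*} [MeasurableSpace α] (μ : Measure α)
    {f : α → ℝ≥0∞} (hf : Measurable f) {S : Set α} (hS : MeasurableSet S)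
    (hfS : ∀ x ∉ S, f x = 0) :
    (∫⁻ x, f x ∂μ) ^ 2 ≤ μ S * ∫⁻ x, f x ^ 2 ∂μ := by
  have hmul : S.indicator 1 * f = f := by
    ext x
    by_cases hx : x ∈ S <;> simp [hx, hfS]
  have hsq : ∀ x, S.indicator (1 : α → ℝ≥0∞) x ^ (2 : ℝ) = S.indicator 1 x := fun x ↦ by
    by_cases hx : x ∈ S <;> simp [hx]
  have hölder := ENNReal.lintegral_mul_le_Lp_mul_Lq μ Real.HolderConjugate.two_two
    (measurable_one.indicator hS).aemeasurable hf.aemeasurable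
  simp only [hmul, hsq, lintegral_indicator_one hS] at hölder
  calc (∫⁻ x, f x ∂μ) ^ 2
      ≤ (μ S ^ (1 / (2 : ℝ)) * (∫⁻ x, f x ^ (2 : ℝ) ∂μ) ^ (1 / (2 : ℝ))) ^ 2 := by gcongr
    _ = μ S * ∫⁻ x, f x ^ 2 ∂μ := by
      rw [mul_pow, ← ENNReal.rpow_natCast, ← ENNReal.rpow_natCast, ← ENNReal.rpow_mul,
        ← ENNReal.rpow_mul]
      norm_num

/-! ### The incidence estimate -/

section Incidence

variable {V : Type*} [NormedAddCommGroup V] [NormedSpace ℝ V]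

/-- The position at time `t` of the moving point `g = (ξ, x)` with velocity `ξ` which is at `x` at
time `0`. -/
def linePoint (g : V × V) (t : ℝ) : V := g.2 + t • g.1

/-- The pair `(ξ, x)` whose `linePoint` is at `P` at time `s` and at `A` at time `u`. -/
def lineThrough (s u : ℝ) (P A : V) : V × V :=
  ((u - s)⁻¹ • (A - P), P - s • (u - s)⁻¹ • (A - P))

theorem linePoint_lineThrough (s u a : ℝ) (P A : V) :
    linePoint (lineThrough s u P A) a = P + ((a - s) / (u - s)) • (A - P) := by
  simp only [linePoint, lineThrough, div_eq_mul_inv, sub_mul, smul_smul]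
  module

theorem linePoint_lineThrough_left (s u : ℝ) (P A : V) :
    linePoint (lineThrough s u P A) s = P := by
  simp [linePoint_lineThrough]

theorem linePoint_lineThrough_right {s u : ℝ} (hus : u - s ≠ 0) (P A : V) :
    linePoint (lineThrough s u P A) u = A := by
  simp [linePoint_lineThrough, div_self hus]

/-- The line `QA` at time `t - ρ (t - u)` is determined by `PB` at time `t - ρ (t - s)`, by `QB` at
time `t - ρ (t - u)` and by the direction of `PA`. This is what singles out these two times. -/
theorem linePoint_quadrilateral {s t u ρ : ℝ} (hts : t - s ≠ 0) (hus : u - s ≠ 0) (hρ : ρ ≠ 0)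
    (g : V × V) (B Q : V) :
    linePoint (lineThrough s u Q (linePoint g u)) (t - ρ * (t - u)) =
      ((t - ρ * (t - u) - s) / (ρ * (u - s))) •
          linePoint (lineThrough s t (linePoint g s) B) (t - ρ * (t - s)) +
        (-((1 - ρ) * (t - s)) / (ρ * (u - s))) •
          linePoint (lineThrough s t Q B) (t - ρ * (t - u)) +
        (t - ρ * (t - u) - s) • g.1 := by
  simp only [linePoint_lineThrough]
  simp only [linePoint]
  match_scalars <;> field_simp <;> ring

variable [FiniteDimensional ℝ V] [MeasureSpace V] [BorelSpace V]

@[fun_prop]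
theorem measurable_linePoint (t : ℝ) : Measurable fun g : V × V ↦ linePoint g t := by
  unfold linePoint
  fun_prop

@[fun_prop]
theorem measurable_lineThrough {α : Type*} [MeasurableSpace α] {P A : α → V} (hP : Measurable P)
    (hA : Measurable A) (s u : ℝ) : Measurable fun z ↦ lineThrough s u (P z) (A z) := by
  unfold lineThrough
  fun_prop

variable [(volume : Measure V).IsAddHaarMeasure]

theorem lintegral_lineThrough (φ : V × V → ℝ≥0∞) {s u : ℝ} (hus : u - s ≠ 0) (P : V) :
    ∫⁻ A, φ (lineThrough s u P A) =
      ENNReal.ofReal (|u - s| ^ finrank ℝ V) * ∫⁻ ξ, φ (ξ, P - s • ξ) := by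
  rw [← ofReal_abs_pow_finrank_mul_lintegral_comp_smul_add volume _ hus P]
  simp only [lineThrough, add_sub_cancel_right, inv_smul_smul₀ hus]

theorem lintegral_lintegral_sub_smul {φ : V × V → ℝ≥0∞} (hφ : Measurable φ) (s : ℝ) :
    ∫⁻ P, ∫⁻ ξ, φ (ξ, P - s • ξ) = ∫⁻ g, φ g := by
  rw [lintegral_lintegral_swap (by fun_prop), Measure.volume_eq_prod,
    lintegral_prod _ (by fun_prop)]
  exact lintegral_congr fun ξ ↦ lintegral_sub_right_eq_self (fun P ↦ φ (ξ, P)) _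

theorem lintegral_lintegral_lineThrough {φ : V × V → ℝ≥0∞} (hφ : Measurable φ) {s u : ℝ}
    (hus : u - s ≠ 0) :
    ∫⁻ P, ∫⁻ A, φ (lineThrough s u P A) =
      ENNReal.ofReal (|u - s| ^ finrank ℝ V) * ∫⁻ g, φ g := by
  simp only [lintegral_lineThrough φ hus]
  rw [lintegral_const_mul' _ _ ENNReal.ofReal_ne_top, lintegral_lintegral_sub_smul hφ]

/-- The size of the set of directions of the lines of `G` which are at `P` at time `s`. -/
def pencil (G : Set (V × V)) (s : ℝ) (P : V) : ℝ≥0∞ := ∫⁻ ξ, G.indicator 1 (ξ, P - s • ξ)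

/-- The size of the set of points `P` such that `G` contains the line which is at `P` at time `s`
and at `z.1` at time `u`, as well as the one which is at `P` at time `s` and at `z.2` at
time `t`. -/
def pathCount (G : Set (V × V)) (s u t : ℝ) (z : V × V) : ℝ≥0∞ :=
  ∫⁻ P, G.indicator 1 (lineThrough s u P z.1) * G.indicator 1 (lineThrough s t P z.2)

variable {G : Set (V × V)} {F : ℝ → Set V} {s t u ρ : ℝ}

theorem measurable_pencil (hG : MeasurableSet G) (s : ℝ) : Measurable (pencil G s) := by
  have : Measurable (G.indicator (1 : V × V → ℝ≥0∞)) := measurable_one.indicator hG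
  unfold pencil
  fun_prop

theorem measurable_pathCount (hG : MeasurableSet G) (s u t : ℝ) :
    Measurable (pathCount G s u t) := by
  have : Measurable (G.indicator (1 : V × V → ℝ≥0∞)) := measurable_one.indicator hG
  unfold pathCount
  fun_prop

theorem sq_volume_le_mul_lintegral_pencil_sq (hG : MeasurableSet G) (hF : MeasurableSet (F s))
    (hs : MapsTo (linePoint · s) G (F s)) :
    volume G ^ 2 ≤ volume (F s) * ∫⁻ P, pencil G s P ^ 2 := by
  have hχ : Measurable (G.indicator (1 : V × V → ℝ≥0∞)) :=
    measurable_one.indicator hG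
  have hmass : ∫⁻ P, pencil G s P = volume G := by
    rw [← lintegral_indicator_one hG, ← lintegral_lintegral_sub_smul hχ s]
    rfl
  rw [← hmass]
  refine sq_lintegral_le_measure_mul_lintegral_sq volume (measurable_pencil hG s) hF fun P hP ↦ ?_
  have hzero : ∀ ξ, G.indicator (1 : V × V → ℝ≥0∞) (ξ, P - s • ξ) = 0 := fun ξ ↦
    indicator_of_notMem (fun hg ↦ hP (by simpa [linePoint] using hs hg)) _
  simp [pencil, hzero]

theorem lintegral_pathCount (hG : MeasurableSet G) (hus : u - s ≠ 0) (hts : t - s ≠ 0) :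
    ∫⁻ z, pathCount G s u t z = ENNReal.ofReal (|u - s| ^ finrank ℝ V) *
      (ENNReal.ofReal (|t - s| ^ finrank ℝ V) * ∫⁻ P, pencil G s P ^ 2) := by
  have : Measurable (G.indicator (1 : V × V → ℝ≥0∞)) := measurable_one.indicator hG
  have hP : ∀ P, ∫⁻ z : V × V, G.indicator 1 (lineThrough s u P z.1) *
      G.indicator 1 (lineThrough s t P z.2) = ENNReal.ofReal (|u - s| ^ finrank ℝ V) *
        (ENNReal.ofReal (|t - s| ^ finrank ℝ V) * pencil G s P ^ 2) := fun P ↦ by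
    rw [Measure.volume_eq_prod,
      lintegral_prod_mul (f := fun A ↦ G.indicator (1 : V × V → ℝ≥0∞) (lineThrough s u P A))
        (g := fun B ↦ G.indicator (1 : V × V → ℝ≥0∞) (lineThrough s t P B))
        (by fun_prop) (by fun_prop),
      lintegral_lineThrough _ hus, lintegral_lineThrough _ hts, pencil]
    ring
  simp only [pathCount]
  rw [lintegral_lintegral_swap (by fun_prop)]
  simp only [hP, lintegral_const_mul' _ _ ENNReal.ofReal_ne_top]

theorem sq_lintegral_pathCount_le (hG : MeasurableSet G) (hFu : MeasurableSet (F u))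
    (hFt : MeasurableSet (F t)) (hus : u - s ≠ 0) (hts : t - s ≠ 0)
    (hu : MapsTo (linePoint · u) G (F u)) (ht : MapsTo (linePoint · t) G (F t)) :
    (∫⁻ z, pathCount G s u t z) ^ 2 ≤
      volume (F u) * volume (F t) * ∫⁻ z, pathCount G s u t z ^ 2 := by
  rw [← Measure.prod_prod, ← Measure.volume_eq_prod]
  refine sq_lintegral_le_measure_mul_lintegral_sq volume (measurable_pathCount hG s u t)
    (hFu.prod hFt) fun z hz ↦ ?_
  have hzero : ∀ P, G.indicator (1 : V × V → ℝ≥0∞) (lineThrough s u P z.1) *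
      G.indicator 1 (lineThrough s t P z.2) = 0 := fun P ↦ by
    by_contra hne
    obtain ⟨hA, hB⟩ := mul_ne_zero_iff.1 hne
    exact hz ⟨by simpa [linePoint_lineThrough_right hus] using hu (mem_of_indicator_ne_zero hA),
      by simpa [linePoint_lineThrough_right hts] using ht (mem_of_indicator_ne_zero hB)⟩
  simp [pathCount, hzero]

theorem lintegral_indicator_mul_comp_smul_add_le (hG : MeasurableSet G) {M : ℝ≥0∞}
    (hM : ∀ ξ, volume (Prod.mk ξ ⁻¹' G) ≤ M) {e : V → ℝ≥0∞} (he : Measurable e) {k : ℝ}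
    (hk : k ≠ 0) (z : V) :
    ENNReal.ofReal (|k| ^ finrank ℝ V) * ∫⁻ g, G.indicator 1 g * e (z + k • g.1) ≤
      M * ∫⁻ y, e y := by
  have : Measurable (G.indicator (1 : V × V → ℝ≥0∞)) := measurable_one.indicator hG
  have hfibre : ∀ ξ, ∫⁻ x, G.indicator 1 (ξ, x) * e (z + k • ξ) ≤ M * e (k • ξ + z) := fun ξ ↦ by
    rw [lintegral_mul_const _ (by fun_prop), add_comm z]
    gcongr
    exact (lintegral_indicator_one (hG.preimage measurable_prodMk_left)).trans_le (hM ξ)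
  calc ENNReal.ofReal (|k| ^ finrank ℝ V) * ∫⁻ g, G.indicator 1 g * e (z + k • g.1)
      ≤ ENNReal.ofReal (|k| ^ finrank ℝ V) * ∫⁻ ξ, M * e (k • ξ + z) := by
        rw [Measure.volume_eq_prod, lintegral_prod _ (by fun_prop)]
        gcongr with ξ
        exact hfibre ξ
    _ = M * ∫⁻ y, e y := by
        rw [lintegral_const_mul _ (by fun_prop), mul_left_comm,
          ofReal_abs_pow_finrank_mul_lintegral_comp_smul_add volume e hk]

/-- The two affine substitutions are `D₁ = PB` at time `t - ρ (t - s)`, in `B`, and `D₂ = QB` at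
time `t - ρ (t - u)`, in `Q`; here `P` is the position of `g` at time `s`. -/
theorem lintegral_lintegral_quadrilateral (hts : t - s ≠ 0) (hus : u - s ≠ 0) (htu : t - u ≠ 0)
    (hρ : ρ ≠ 0) (hρ1 : 1 - ρ ≠ 0) (Ψ : V → V → V → ℝ≥0∞) (g : V × V) :
    ENNReal.ofReal (|1 - ρ| ^ finrank ℝ V) *
        (ENNReal.ofReal (|ρ * (t - u) / (t - s)| ^ finrank ℝ V) * ∫⁻ B, ∫⁻ Q,
          Ψ (linePoint (lineThrough s t (linePoint g s) B) (t - ρ * (t - s)))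
            (linePoint (lineThrough s t Q B) (t - ρ * (t - u)))
            (linePoint (lineThrough s u Q (linePoint g u)) (t - ρ * (t - u)))) =
      ∫⁻ D₁, ∫⁻ D₂, Ψ D₁ D₂
        (((t - ρ * (t - u) - s) / (ρ * (u - s))) • D₁ +
          (-((1 - ρ) * (t - s)) / (ρ * (u - s))) • D₂ + (t - ρ * (t - u) - s) • g.1) := by
  have hβ : ρ * (t - u) / (t - s) ≠ 0 := by positivity
  have hD₁ : ∀ B, linePoint (lineThrough s t (linePoint g s) B) (t - ρ * (t - s)) =
      (1 - ρ) • B + ρ • linePoint g s := fun B ↦ by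
    rw [linePoint_lineThrough]
    match_scalars <;> field_simp <;> ring
  have hD₂ : ∀ B Q : V, linePoint (lineThrough s t Q B) (t - ρ * (t - u)) =
      (ρ * (t - u) / (t - s)) • Q + (1 - ρ * (t - u) / (t - s)) • B := fun B Q ↦ by
    rw [linePoint_lineThrough]
    match_scalars <;> field_simp <;> ring
  set Φ : V → V → ℝ≥0∞ := fun D₁ D₂ ↦ Ψ D₁ D₂
    (((t - ρ * (t - u) - s) / (ρ * (u - s))) • D₁ +
      (-((1 - ρ) * (t - s)) / (ρ * (u - s))) • D₂ + (t - ρ * (t - u) - s) • g.1)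
  have hQ : ∀ B, ENNReal.ofReal (|ρ * (t - u) / (t - s)| ^ finrank ℝ V) * ∫⁻ Q,
      Ψ (linePoint (lineThrough s t (linePoint g s) B) (t - ρ * (t - s)))
        (linePoint (lineThrough s t Q B) (t - ρ * (t - u)))
        (linePoint (lineThrough s u Q (linePoint g u)) (t - ρ * (t - u))) =
      ∫⁻ D₂, Φ ((1 - ρ) • B + ρ • linePoint g s) D₂ := fun B ↦ by
    simp only [linePoint_quadrilateral hts hus hρ g B, hD₁, hD₂]
    exact ofReal_abs_pow_finrank_mul_lintegral_comp_smul_add volume (Φ _) hβ _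
  rw [← lintegral_const_mul' _ _ ENNReal.ofReal_ne_top, lintegral_congr hQ]
  exact ofReal_abs_pow_finrank_mul_lintegral_comp_smul_add volume (fun D₁ ↦ ∫⁻ D₂, Φ D₁ D₂)
    hρ1 _

theorem lintegral_pathCount_sq_le_lintegral (hG : MeasurableSet G)
    (hF₂ : MeasurableSet (F (t - ρ * (t - s)))) (hF₃ : MeasurableSet (F (t - ρ * (t - u))))
    (hus : u - s ≠ 0)
    (h₂ : MapsTo (linePoint · (t - ρ * (t - s))) G (F (t - ρ * (t - s))))
    (h₃ : MapsTo (linePoint · (t - ρ * (t - u))) G (F (t - ρ * (t - u)))) :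
    ∫⁻ z, pathCount G s u t z ^ 2 ≤ ENNReal.ofReal (|u - s| ^ finrank ℝ V) *
      ∫⁻ g, G.indicator 1 g * ∫⁻ B, ∫⁻ Q,
        (F (t - ρ * (t - s))).indicator 1
            (linePoint (lineThrough s t (linePoint g s) B) (t - ρ * (t - s))) *
          ((F (t - ρ * (t - u))).indicator 1
              (linePoint (lineThrough s t Q B) (t - ρ * (t - u))) *
            (F (t - ρ * (t - u))).indicator 1
              (linePoint (lineThrough s u Q (linePoint g u)) (t - ρ * (t - u)))) := by
  have : Measurable (G.indicator (1 : V × V → ℝ≥0∞)) := measurable_one.indicator hG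
  have : Measurable ((F (t - ρ * (t - s))).indicator (1 : V → ℝ≥0∞)) :=
    measurable_one.indicator hF₂
  have : Measurable ((F (t - ρ * (t - u))).indicator (1 : V → ℝ≥0∞)) :=
    measurable_one.indicator hF₃
  have hpath := measurable_pathCount hG s u t
  have hle : ∀ a, MapsTo (linePoint · a) G (F a) → ∀ g,
      G.indicator (1 : V × V → ℝ≥0∞) g ≤ (F a).indicator 1 (linePoint g a) := fun a ha g ↦
    indicator_le_indicator_of_subset ha (by simp) g
  rw [← lintegral_lintegral_lineThrough (by fun_prop) hus]
  calc ∫⁻ z, pathCount G s u t z ^ 2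
      = ∫⁻ z, ∫⁻ P, G.indicator 1 (lineThrough s u P z.1) *
          G.indicator 1 (lineThrough s t P z.2) * pathCount G s u t z :=
        lintegral_congr fun z ↦ by rw [lintegral_mul_const _ (by fun_prop), sq, pathCount]
    _ = ∫⁻ P, ∫⁻ A, ∫⁻ B, G.indicator 1 (lineThrough s u P A) *
          G.indicator 1 (lineThrough s t P B) * pathCount G s u t (A, B) := by
        rw [lintegral_lintegral_swap (by fun_prop)]
        refine lintegral_congr fun P ↦ ?_
        rw [Measure.volume_eq_prod, lintegral_prod _ (by fun_prop)]
    _ ≤ _ := by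
        gcongr with P A
        simp only [linePoint_lineThrough_left, linePoint_lineThrough_right hus, pathCount]
        rw [← lintegral_const_mul _ (by fun_prop)]
        simp only [mul_assoc]
        gcongr with B
        rw [← lintegral_const_mul _ (by fun_prop)]
        refine lintegral_mono fun Q ↦ mul_le_mul' (hle _ h₂ _) ?_
        rw [mul_comm]
        exact mul_le_mul' (hle _ h₃ _) (hle _ h₃ _)

theorem lintegral_indicator_mul_lintegral_lintegral_le (hG : MeasurableSet G) {M : ℝ≥0∞}
    (hM : ∀ ξ, volume (Prod.mk ξ ⁻¹' G) ≤ M) {e₁ e₂ e₃ : V → ℝ≥0∞} (he₁ : Measurable e₁)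
    (he₂ : Measurable e₂) (he₃ : Measurable e₃) {k : ℝ} (hk : k ≠ 0) (m₁ m₂ : ℝ) :
    ENNReal.ofReal (|k| ^ finrank ℝ V) * ∫⁻ g, G.indicator 1 g *
        ∫⁻ D₁, ∫⁻ D₂, e₁ D₁ * (e₂ D₂ * e₃ (m₁ • D₁ + m₂ • D₂ + k • g.1)) ≤
      M * ((∫⁻ y, e₁ y) * ((∫⁻ y, e₂ y) * ∫⁻ y, e₃ y)) := by
  have : Measurable (G.indicator (1 : V × V → ℝ≥0∞)) := measurable_one.indicator hG
  calc ENNReal.ofReal (|k| ^ finrank ℝ V) * ∫⁻ g, G.indicator 1 g *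
        ∫⁻ D₁, ∫⁻ D₂, e₁ D₁ * (e₂ D₂ * e₃ (m₁ • D₁ + m₂ • D₂ + k • g.1))
      = ENNReal.ofReal (|k| ^ finrank ℝ V) * ∫⁻ g, ∫⁻ D₁, ∫⁻ D₂, e₁ D₁ * e₂ D₂ *
          (G.indicator 1 g * e₃ (m₁ • D₁ + m₂ • D₂ + k • g.1)) := by
        congr 1
        refine lintegral_congr fun g ↦ ?_
        rw [← lintegral_const_mul _ (by fun_prop)]
        refine lintegral_congr fun D₁ ↦ ?_
        rw [← lintegral_const_mul _ (by fun_prop)]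
        exact lintegral_congr fun D₂ ↦ by ring
    _ = ∫⁻ D₁, ∫⁻ D₂, e₁ D₁ * e₂ D₂ * (ENNReal.ofReal (|k| ^ finrank ℝ V) *
          ∫⁻ g, G.indicator 1 g * e₃ (m₁ • D₁ + m₂ • D₂ + k • g.1)) := by
        rw [lintegral_lintegral_swap (by fun_prop),
          ← lintegral_const_mul' _ _ ENNReal.ofReal_ne_top]
        refine lintegral_congr fun D₁ ↦ ?_
        rw [lintegral_lintegral_swap (by fun_prop),
          ← lintegral_const_mul' _ _ ENNReal.ofReal_ne_top]
        refine lintegral_congr fun D₂ ↦ ?_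
        rw [lintegral_const_mul _ (by fun_prop), mul_left_comm]
    _ ≤ ∫⁻ D₁, ∫⁻ D₂, e₁ D₁ * e₂ D₂ * (M * ∫⁻ y, e₃ y) := by
        exact lintegral_mono fun D₁ ↦ lintegral_mono fun D₂ ↦
          mul_le_mul' le_rfl (lintegral_indicator_mul_comp_smul_add_le hG hM he₃ hk _)
    _ = M * ((∫⁻ y, e₁ y) * ((∫⁻ y, e₂ y) * ∫⁻ y, e₃ y)) := by
        simp only [mul_assoc, lintegral_const_mul _ (he₂.mul_const _), lintegral_mul_const _ he₂,
          lintegral_mul_const _ he₁]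
        ring

theorem lintegral_pathCount_sq_le (hG : MeasurableSet G) {M : ℝ≥0∞}
    (hM : ∀ ξ, volume (Prod.mk ξ ⁻¹' G) ≤ M)
    (hF₂ : MeasurableSet (F (t - ρ * (t - s)))) (hF₃ : MeasurableSet (F (t - ρ * (t - u))))
    (hts : t - s ≠ 0) (hus : u - s ≠ 0) (htu : t - u ≠ 0) (hρ : ρ ≠ 0) (hρ1 : 1 - ρ ≠ 0)
    (hk : t - ρ * (t - u) - s ≠ 0)
    (h₂ : MapsTo (linePoint · (t - ρ * (t - s))) G (F (t - ρ * (t - s))))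
    (h₃ : MapsTo (linePoint · (t - ρ * (t - u))) G (F (t - ρ * (t - u)))) :
    ENNReal.ofReal (|t - ρ * (t - u) - s| ^ finrank ℝ V) *
        (ENNReal.ofReal (|1 - ρ| ^ finrank ℝ V) *
          (ENNReal.ofReal (|ρ * (t - u) / (t - s)| ^ finrank ℝ V) *
            ∫⁻ z, pathCount G s u t z ^ 2)) ≤
      ENNReal.ofReal (|u - s| ^ finrank ℝ V) *
        (M * (volume (F (t - ρ * (t - s))) * volume (F (t - ρ * (t - u))) ^ 2)) := by
  have hquad := lintegral_lintegral_quadrilateral hts hus htu hρ hρ1 fun D₁ D₂ D₃ ↦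
    (F (t - ρ * (t - s))).indicator (1 : V → ℝ≥0∞) D₁ *
      ((F (t - ρ * (t - u))).indicator 1 D₂ * (F (t - ρ * (t - u))).indicator 1 D₃)
  have htri := lintegral_indicator_mul_lintegral_lintegral_le hG hM
    (measurable_one.indicator hF₂) (measurable_one.indicator hF₃) (measurable_one.indicator hF₃) hk
    ((t - ρ * (t - u) - s) / (ρ * (u - s))) (-((1 - ρ) * (t - s)) / (ρ * (u - s)))
  simp only [← hquad, mul_left_comm (G.indicator _ _) (ENNReal.ofReal _),
    lintegral_const_mul' _ _ ENNReal.ofReal_ne_top, lintegral_indicator_one hF₂,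
    lintegral_indicator_one hF₃, ← sq] at htri
  grw [lintegral_pathCount_sq_le_lintegral hG hF₂ hF₃ hus h₂ h₃, ← htri]
  exact le_of_eq (by ring)

/-- Two applications of Cauchy–Schwarz bound `|G|⁴` by the number of quadrilaterals `PAQB`. -/
theorem volume_pow_four_le (hG : MeasurableSet G) {M : ℝ≥0∞}
    (hM : ∀ ξ, volume (Prod.mk ξ ⁻¹' G) ≤ M) (hF : ∀ a, MeasurableSet (F a))
    (hts : t - s ≠ 0) (hus : u - s ≠ 0) (htu : t - u ≠ 0) (hρ : ρ ≠ 0) (hρ1 : 1 - ρ ≠ 0)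
    (hk : t - ρ * (t - u) - s ≠ 0)
    (hmeet : ∀ a ∈ ({s, t, u, t - ρ * (t - s), t - ρ * (t - u)} : Set ℝ),
      MapsTo (linePoint · a) G (F a)) :
    ENNReal.ofReal (|(u - s) * (t - s) * ρ * (t - u) * (1 - ρ) * (t - ρ * (t - u) - s)| ^
        finrank ℝ V) * volume G ^ 4 ≤
      M * (volume (F s) ^ 2 * volume (F u) * volume (F t) * volume (F (t - ρ * (t - s))) *
        volume (F (t - ρ * (t - u))) ^ 2) := by
  simp only [mem_insert_iff, mem_singleton_iff, forall_eq_or_imp, forall_eq] at hmeet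
  obtain ⟨hs, ht, hu, h₂, h₃⟩ := hmeet
  have hU0 : ENNReal.ofReal (|u - s| ^ finrank ℝ V) ≠ 0 := by
    have : 0 < |u - s| ^ finrank ℝ V := by positivity
    exact (ENNReal.ofReal_pos.2 this).ne'
  have hpencil := sq_volume_le_mul_lintegral_pencil_sq hG (hF s) hs
  have hpath := sq_lintegral_pathCount_le hG (hF u) (hF t) hus hts hu ht
  have hquad := lintegral_pathCount_sq_le hG hM (hF _) (hF _) hts hus htu hρ hρ1 hk h₂ h₃
  rw [lintegral_pathCount hG hus hts] at hpath
  have hscale : (u - s) * (t - s) * ρ * (t - u) * (1 - ρ) * (t - ρ * (t - u) - s) =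
      (u - s) * ((t - s) * ((t - s) *
        ((t - ρ * (t - u) - s) * ((1 - ρ) * (ρ * (t - u) / (t - s)))))) := by
    field_simp
  rw [hscale]
  simp only [abs_mul _ (_ * _), abs_mul _ (_ / _), mul_pow,
    ENNReal.ofReal_mul (pow_nonneg (abs_nonneg _) _)]
  set U := ENNReal.ofReal (|u - s| ^ finrank ℝ V)
  set T := ENNReal.ofReal (|t - s| ^ finrank ℝ V)
  set K := ENNReal.ofReal (|t - ρ * (t - u) - s| ^ finrank ℝ V)
  set R := ENNReal.ofReal (|1 - ρ| ^ finrank ℝ V)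
  set B := ENNReal.ofReal (|ρ * (t - u) / (t - s)| ^ finrank ℝ V)
  rw [← ENNReal.mul_le_mul_iff_right hU0 ENNReal.ofReal_ne_top]
  calc U * (U * (T * (T * (K * (R * B)))) * volume G ^ 4)
      = K * (R * B) * (U * T) ^ 2 * (volume G ^ 2) ^ 2 := by ring
    _ ≤ K * (R * B) * (U * T) ^ 2 * (volume (F s) * ∫⁻ P, pencil G s P ^ 2) ^ 2 := by gcongr
    _ = K * (R * B) * volume (F s) ^ 2 * (U * (T * ∫⁻ P, pencil G s P ^ 2)) ^ 2 := by ring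
    _ ≤ K * (R * B) * volume (F s) ^ 2 *
          (volume (F u) * volume (F t) * ∫⁻ z, pathCount G s u t z ^ 2) := by gcongr
    _ = volume (F s) ^ 2 * volume (F u) * volume (F t) *
          (K * (R * (B * ∫⁻ z, pathCount G s u t z ^ 2))) := by ring
    _ ≤ volume (F s) ^ 2 * volume (F u) * volume (F t) * (U * (M *
          (volume (F (t - ρ * (t - s))) * volume (F (t - ρ * (t - u))) ^ 2))) := by gcongr
    _ = _ := by ring

end Incidence

/-! ### Integrals on the line -/

theorem le_two_mul_of_le_half_add {a b : ℝ≥0∞} (ha : a ≠ ∞) (h : a ≤ a / 2 + b) :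
    a ≤ 2 * b := by
  have hhalf : a / 2 ≤ b := by
    rw [← ENNReal.add_le_add_iff_left (ENNReal.div_ne_top ha two_ne_zero), ENNReal.add_halves]
    exact h
  calc a = 2 * (a / 2) := (ENNReal.mul_div_cancel two_ne_zero ofNat_ne_top).symm
    _ ≤ 2 * b := by gcongr

theorem lintegral_comp_abs (f : ℝ → ℝ≥0∞) : ∫⁻ x, f |x| = 2 * ∫⁻ x in Ioi 0, f x := by
  have hpos : ∫⁻ x in Ioi 0, f |x| = ∫⁻ x in Ioi 0, f x :=
    setLIntegral_congr_fun measurableSet_Ioi fun x hx ↦ by rw [abs_of_pos hx]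
  have hneg : ∫⁻ x in (Ioi (0 : ℝ))ᶜ, f |x| = ∫⁻ x in Ioi 0, f |x| := by
    have hflip := (Measure.measurePreserving_neg volume).setLIntegral_comp_preimage_emb
      (MeasurableEquiv.neg ℝ).measurableEmbedding (fun x ↦ f |x|) (Iio 0)
    rw [compl_Ioi, setLIntegral_congr Iio_ae_eq_Iic.symm, ← hflip]
    simp
  rw [← lintegral_add_compl _ (measurableSet_Ioi (a := (0 : ℝ))), hneg, hpos, two_mul]

/-- The indicator of the condition `a ≤ b`, as a factor in integrands. -/
def leInd (a b : ℝ) : ℝ≥0∞ := if a ≤ b then 1 else 0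

@[fun_prop]
theorem measurable_leInd {α : Type*} [MeasurableSpace α] {f g : α → ℝ} (hf : Measurable f)
    (hg : Measurable g) : Measurable fun x ↦ leInd (f x) (g x) :=
  Measurable.ite (measurableSet_le hf hg) measurable_const measurable_const

theorem leInd_of_le {a b : ℝ} (h : a ≤ b) : leInd a b = 1 := if_pos h

theorem leInd_of_lt {a b : ℝ} (h : b < a) : leInd a b = 0 := if_neg h.not_ge

theorem leInd_le_one (a b : ℝ) : leInd a b ≤ 1 := by
  unfold leInd
  split_ifs <;> simp

theorem leInd_mul_le_leInd_mul {a b a' b' : ℝ} {x y : ℝ≥0∞} (h : a ≤ b → a' ≤ b' ∧ x ≤ y) :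
    leInd a b * x ≤ leInd a' b' * y := by
  by_cases hab : a ≤ b
  · simpa only [leInd_of_le hab, leInd_of_le (h hab).1, one_mul] using (h hab).2
  · simp [leInd_of_lt (not_le.1 hab)]

theorem lintegral_leInd_abs_sub (t a : ℝ) : ∫⁻ s, leInd |t - s| a = ENNReal.ofReal (2 * a) := by
  have hball : ∀ s, leInd |t - s| a = (Metric.closedBall t a).indicator 1 s := fun s ↦ by
    simp [leInd, indicator, abs_sub_comm s t, Real.dist_eq]
  simp only [hball]
  rw [lintegral_indicator_one measurableSet_closedBall, Real.volume_closedBall]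

theorem exists_lintegral_rpow_near_le {η : ℝ} (hη : 0 < η) : ∃ K : ℝ, 0 < K ∧ ∀ z : ℝ,
    ∫⁻ x, leInd |x - z| 1 * ENNReal.ofReal (|x - z| ^ (-1 + η)) ≤ ENNReal.ofReal K := by
  have hfin : ∫⁻ x, leInd |x| 1 * ENNReal.ofReal (|x| ^ (-1 + η)) ≠ ∞ := by
    rw [lintegral_comp_abs fun x ↦ leInd x 1 * ENNReal.ofReal (x ^ (-1 + η))]
    have hint : IntegrableOn (fun x : ℝ ↦ x ^ (-1 + η)) (Ioc 0 1) := by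
      rw [← intervalIntegrable_iff_integrableOn_Ioc_of_le zero_le_one]
      exact intervalIntegral.intervalIntegrable_rpow' (by linarith)
    refine mul_ne_top ofNat_ne_top (ne_top_of_le_ne_top hint.lintegral_lt_top.ne ?_)
    rw [← lintegral_indicator measurableSet_Ioi, ← lintegral_indicator measurableSet_Ioc]
    refine lintegral_mono fun x ↦ ?_
    by_cases h0 : 0 < x <;> by_cases h1 : x ≤ 1 <;> simp [h0, h1, leInd]
  set I := ∫⁻ x, leInd |x| 1 * ENNReal.ofReal (|x| ^ (-1 + η))
  refine ⟨I.toReal + 1, by positivity, fun z ↦ ?_⟩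
  calc ∫⁻ x, leInd |x - z| 1 * ENNReal.ofReal (|x - z| ^ (-1 + η))
      = I := lintegral_sub_right_eq_self (fun x ↦ leInd |x| 1 * ENNReal.ofReal (|x| ^ (-1 + η))) z
    _ = ENNReal.ofReal I.toReal := (ENNReal.ofReal_toReal hfin).symm
    _ ≤ ENNReal.ofReal (I.toReal + 1) := ENNReal.ofReal_le_ofReal (by linarith)

theorem lintegral_rpow_far {κ a : ℝ} (hκ : 0 < κ) (ha : 0 < a) (z : ℝ) :
    ∫⁻ x, leInd a |z - x| * ENNReal.ofReal (|z - x| ^ (-1 - κ)) =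
      ENNReal.ofReal (2 / κ * a ^ (-κ)) := by
  have hset : ∫⁻ x in Ioi 0, leInd a x * ENNReal.ofReal (x ^ (-1 - κ)) =
      ∫⁻ x in Ioi a, ENNReal.ofReal (x ^ (-1 - κ)) := by
    rw [setLIntegral_congr Ioi_ae_eq_Ici, ← lintegral_indicator measurableSet_Ici,
      setLIntegral_congr (Ioi_ae_eq_Ici (a := a)), ← lintegral_indicator measurableSet_Ici]
    refine lintegral_congr fun x ↦ ?_
    by_cases hx : a ≤ x
    · simp [hx, ha.le.trans hx, leInd]
    · simp [hx, leInd]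
  have hpow : ∫⁻ x in Ioi a, ENNReal.ofReal (x ^ (-1 - κ)) = ENNReal.ofReal (a ^ (-κ) / κ) := by
    rw [← ofReal_integral_eq_lintegral_ofReal (integrableOn_Ioi_rpow_of_lt (by linarith) ha),
      integral_Ioi_rpow_of_lt (by linarith) ha, show -1 - κ + 1 = -κ by ring, neg_div_neg_eq]
    filter_upwards [ae_restrict_mem measurableSet_Ioi] with x hx
    exact Real.rpow_nonneg (ha.trans hx).le _
  rw [lintegral_sub_left_eq_self fun x ↦ leInd a |x| * ENNReal.ofReal (|x| ^ (-1 - κ)),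
    lintegral_comp_abs fun x ↦ leInd a x * ENNReal.ofReal (x ^ (-1 - κ)), hset, hpow,
    ← ENNReal.ofReal_ofNat 2, ← ENNReal.ofReal_mul zero_le_two]
  congr 1
  ring

theorem lintegral₃_add_right {α : Type*} [MeasurableSpace α] (μ : Measure α) [SFinite μ]
    (S : α × α × α → ℝ≥0∞) {T : α × α × α → ℝ≥0∞} (hT : Measurable T) :
    ∫⁻ a, ∫⁻ b, ∫⁻ c, S (a, b, c) + T (a, b, c) ∂μ ∂μ ∂μ =
      (∫⁻ a, ∫⁻ b, ∫⁻ c, S (a, b, c) ∂μ ∂μ ∂μ) + ∫⁻ a, ∫⁻ b, ∫⁻ c, T (a, b, c) ∂μ ∂μ ∂μ := by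
  rw [← lintegral_add_right _ (by fun_prop)]
  refine lintegral_congr fun a ↦ ?_
  rw [← lintegral_add_right _ (by fun_prop)]
  exact lintegral_congr fun b ↦ lintegral_add_right _ (by fun_prop)

theorem lintegral₃_le_six_mul_of_le_sum_perm {α : Type*} [MeasurableSpace α] (μ : Measure α)
    [SFinite μ] {F : α × α × α → ℝ≥0∞} {G : α → α → α → ℝ≥0∞} (hF : Measurable F)
    (hGF : ∀ a b c, G a b c ≤ F (a, b, c) + F (a, c, b) + (F (b, a, c) + F (b, c, a)) +
      (F (c, a, b) + F (c, b, a))) :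
    ∫⁻ a, ∫⁻ b, ∫⁻ c, G a b c ∂μ ∂μ ∂μ ≤ 6 * ∫⁻ a, ∫⁻ b, ∫⁻ c, F (a, b, c) ∂μ ∂μ ∂μ := by
  have swap₂₃ : ∀ {S : α × α × α → ℝ≥0∞}, Measurable S →
      ∫⁻ a, ∫⁻ b, ∫⁻ c, S (a, c, b) ∂μ ∂μ ∂μ = ∫⁻ a, ∫⁻ b, ∫⁻ c, S (a, b, c) ∂μ ∂μ ∂μ :=
    fun hS ↦ lintegral_congr fun a ↦ lintegral_lintegral_swap (by fun_prop)
  have swap₁₂ : ∀ {S : α × α × α → ℝ≥0∞}, Measurable S →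
      ∫⁻ a, ∫⁻ b, ∫⁻ c, S (b, a, c) ∂μ ∂μ ∂μ = ∫⁻ a, ∫⁻ b, ∫⁻ c, S (a, b, c) ∂μ ∂μ ∂μ :=
    fun hS ↦ lintegral_lintegral_swap (by fun_prop)
  let S : α × α × α → ℝ≥0∞ := fun z ↦ F z + F (z.1, z.2.2, z.2.1)
  have hS : Measurable S := by fun_prop
  have hI : ∫⁻ a, ∫⁻ b, ∫⁻ c, S (a, b, c) ∂μ ∂μ ∂μ =
      2 * ∫⁻ a, ∫⁻ b, ∫⁻ c, F (a, b, c) ∂μ ∂μ ∂μ := by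
    rw [lintegral₃_add_right μ F (T := fun z ↦ F (z.1, z.2.2, z.2.1)) (by fun_prop), swap₂₃ hF,
      two_mul]
  calc ∫⁻ a, ∫⁻ b, ∫⁻ c, G a b c ∂μ ∂μ ∂μ
      ≤ ∫⁻ a, ∫⁻ b, ∫⁻ c, S (a, b, c) + S (b, a, c) + S (c, a, b) ∂μ ∂μ ∂μ := by
        gcongr with a b c
        exact hGF a b c
    _ = 6 * ∫⁻ a, ∫⁻ b, ∫⁻ c, F (a, b, c) ∂μ ∂μ ∂μ := by
        rw [lintegral₃_add_right μ (fun z ↦ S z + S (z.2.1, z.1, z.2.2))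
            (T := fun z ↦ S (z.2.2, z.1, z.2.1)) (by fun_prop),
          lintegral₃_add_right μ S (T := fun z ↦ S (z.2.1, z.1, z.2.2)) (by fun_prop),
          swap₂₃ (S := fun z ↦ S (z.2.1, z.1, z.2.2)) (by fun_prop), swap₁₂ hS, hI]
        ring

/-! ### The one-dimensional inequality -/

section OneDimensional

theorem leInd_abs_sub_le_sum_perm (m a b c : ℝ) :
    leInd m |a - b| ≤
      leInd |a - c| (|a - b| / 2) * leInd m |a - b| +
          leInd |a - b| (|a - c| / 2) * leInd m |a - c| +
        (leInd |b - c| (|b - a| / 2) * leInd m |b - a| +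
          leInd |b - a| (|b - c| / 2) * leInd m |b - c|) +
        (leInd |c - b| (|c - a| / 2) * leInd m |c - a| +
          leInd |c - a| (|c - b| / 2) * leInd m |c - b|) := by
  rcases lt_or_ge |a - b| m with h | h
  · simp [leInd_of_lt h]
  refine (leInd_le_one _ _).trans ?_
  have hnear : ((|a - c| ≤ |a - b| / 2 ∧ m ≤ |a - b|) ∨ |a - b| ≤ |a - c| / 2 ∧ m ≤ |a - c|) ∨
      ((|b - c| ≤ |b - a| / 2 ∧ m ≤ |b - a|) ∨ |b - a| ≤ |b - c| / 2 ∧ m ≤ |b - c|) ∨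
      ((|c - b| ≤ |c - a| / 2 ∧ m ≤ |c - a|) ∨ |c - a| ≤ |c - b| / 2 ∧ m ≤ |c - b|) := by grind
  have hpair : ∀ {p q p' q' x y x' y' : ℝ}, ((p ≤ q ∧ x ≤ y) ∨ p' ≤ q' ∧ x' ≤ y') →
      1 ≤ leInd p q * leInd x y + leInd p' q' * leInd x' y' := by
    rintro p q p' q' x y x' y' (h | h) <;> simp [leInd_of_le h.1, leInd_of_le h.2]
  rcases hnear with h | h | h
  · exact le_add_right (le_add_right (hpair h))
  · exact le_add_right (le_add_left (hpair h))
  · exact le_add_left (hpair h)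

variable {e : ℝ → ℝ≥0∞} {y : ℝ}

theorem ofReal_half_le_lintegral_far (he1 : ∀ x, e x ≤ 1) (hy : 0 ≤ y)
    (hV : ∫⁻ x, e x = ENNReal.ofReal y) (s : ℝ) :
    ENNReal.ofReal (y / 2) ≤ ∫⁻ u, e u * leInd (y / 4) |u - s| := by
  rw [← ENNReal.add_le_add_iff_left (a := ENNReal.ofReal (y / 2)) ENNReal.ofReal_ne_top]
  calc ENNReal.ofReal (y / 2) + ENNReal.ofReal (y / 2)
      = ∫⁻ u, e u := by
        rw [← ENNReal.ofReal_add (by positivity) (by positivity), add_halves, hV]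
    _ ≤ ∫⁻ u, (leInd |s - u| (y / 4) + e u * leInd (y / 4) |u - s|) := by
        refine lintegral_mono fun u ↦ ?_
        rcases le_total (y / 4) |u - s| with h | h
        · rw [leInd_of_le h, mul_one]
          exact le_add_self
        · rw [abs_sub_comm s u, leInd_of_le h]
          exact le_add_right (he1 u)
    _ = ENNReal.ofReal (y / 2) + ∫⁻ u, e u * leInd (y / 4) |u - s| := by
        rw [lintegral_add_left (by fun_prop), lintegral_leInd_abs_sub,
          show 2 * (y / 4) = y / 2 by ring]

theorem ofReal_pow_three_le_lintegral_triples (he : Measurable e) (he1 : ∀ x, e x ≤ 1)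
    (hy : 0 ≤ y) (hV : ∫⁻ x, e x = ENNReal.ofReal y) :
    ENNReal.ofReal (y ^ 3) ≤ 12 * ∫⁻ t, ∫⁻ s, ∫⁻ τ,
      e t * e s * e τ * (leInd |t - τ| (|t - s| / 2) * leInd (y / 4) |t - s|) := by
  have hfar : ENNReal.ofReal y * ENNReal.ofReal (y / 2) * ENNReal.ofReal y ≤
      ∫⁻ a, ∫⁻ b, ∫⁻ c, e a * e b * e c * leInd (y / 4) |a - b| := by
    calc ENNReal.ofReal y * ENNReal.ofReal (y / 2) * ENNReal.ofReal y
        = ∫⁻ a, e a * ENNReal.ofReal (y / 2) * ENNReal.ofReal y := by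
          rw [lintegral_mul_const _ (by fun_prop), lintegral_mul_const _ he, hV]
      _ ≤ ∫⁻ a, e a * (∫⁻ b, e b * leInd (y / 4) |b - a|) * ENNReal.ofReal y := by
          gcongr with a
          exact ofReal_half_le_lintegral_far he1 hy hV a
      _ = ∫⁻ a, ∫⁻ b, ∫⁻ c, e a * e b * e c * leInd (y / 4) |a - b| := by
          refine lintegral_congr fun a ↦ ?_
          rw [← lintegral_const_mul _ (by fun_prop), ← lintegral_mul_const _ (by fun_prop)]
          refine lintegral_congr fun b ↦ ?_
          rw [← hV, ← lintegral_const_mul _ he, abs_sub_comm b a]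
          exact lintegral_congr fun c ↦ by ring
  calc ENNReal.ofReal (y ^ 3)
      = 2 * (ENNReal.ofReal y * ENNReal.ofReal (y / 2) * ENNReal.ofReal y) := by
        rw [← ENNReal.ofReal_mul hy, ← ENNReal.ofReal_mul (by positivity),
          ← ENNReal.ofReal_ofNat 2, ← ENNReal.ofReal_mul zero_le_two]
        congr 1
        ring
    _ ≤ 2 * (6 * ∫⁻ t, ∫⁻ s, ∫⁻ τ,
          e t * e s * e τ * (leInd |t - τ| (|t - s| / 2) * leInd (y / 4) |t - s|)) := by
        refine mul_le_mul_right (hfar.trans ?_) 2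
        refine lintegral₃_le_six_mul_of_le_sum_perm volume (F := fun z ↦ e z.1 * e z.2.1 * e z.2.2 *
          (leInd |z.1 - z.2.2| (|z.1 - z.2.1| / 2) * leInd (y / 4) |z.1 - z.2.1|)) (by fun_prop)
          fun a b c ↦ ?_
        calc e a * e b * e c * leInd (y / 4) |a - b| ≤ _ :=
              mul_le_mul_right (leInd_abs_sub_le_sum_perm (y / 4) a b c) _
          _ = _ := by ring
    _ = _ := by rw [← mul_assoc]; norm_num

theorem lintegral_mul_leInd_eq_smul (e : ℝ → ℝ≥0∞) {t s : ℝ} (hts : t - s ≠ 0) :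
    ∫⁻ τ, e τ * leInd |t - τ| (|t - s| / 2) =
      ENNReal.ofReal |t - s| * ∫⁻ ρ, e (t - ρ * (t - s)) * leInd |ρ| (1 / 2) := by
  have hsub := ofReal_abs_pow_finrank_mul_lintegral_comp_smul_add volume
    (fun τ ↦ e τ * leInd |t - τ| (|t - s| / 2)) (neg_ne_zero.2 hts) t
  rw [← hsub, finrank_self, pow_one, abs_neg]
  congr 1
  refine lintegral_congr fun ρ ↦ ?_
  have hτ : -(t - s) • ρ + t = t - ρ * (t - s) := by rw [smul_eq_mul]; ring
  have hdist : |t - (t - ρ * (t - s))| = |ρ| * |t - s| := by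
    rw [← abs_mul]
    congr 1
    ring
  have hiff : |ρ| * |t - s| ≤ |t - s| / 2 ↔ |ρ| ≤ 1 / 2 := by
    rw [← one_div_mul_eq_div, mul_le_mul_iff_left₀ (abs_pos.2 hts)]
  simp only [hτ, hdist, leInd, hiff]

/-- The centre `c` confines all the points `s` attached to it to a common scale `|t - c|`. -/
theorem leInd_mul_ofReal_le_lintegral_centre (y t s : ℝ) :
    leInd (y / 4) |t - s| * ENNReal.ofReal |t - s| ≤
      17 * ∫⁻ c, leInd |s - c| (|t - c| / 32) * leInd (y / 5) |t - c| := by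
  rcases lt_or_ge |t - s| (y / 4) with h | h
  · simp [leInd_of_lt h]
  have hts := abs_nonneg (t - s)
  calc leInd (y / 4) |t - s| * ENNReal.ofReal |t - s|
      ≤ 17 * ENNReal.ofReal (2 * (|t - s| / 33)) := by
        rw [leInd_of_le h, one_mul, ← ENNReal.ofReal_ofNat 17, ← ENNReal.ofReal_mul (by norm_num)]
        exact ENNReal.ofReal_le_ofReal (by linarith)
    _ = 17 * ∫⁻ c, leInd |s - c| (|t - s| / 33) * 1 := by
        simp only [mul_one, lintegral_leInd_abs_sub]
    _ ≤ _ := by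
        refine mul_le_mul_right (lintegral_mono fun c ↦ leInd_mul_le_leInd_mul fun hc ↦ ?_) 17
        have htri : |t - s| ≤ |t - c| + |s - c| := abs_sub_comm s c ▸ abs_sub_le t c s
        exact ⟨by linarith, (leInd_of_le (by linarith)).ge⟩

theorem lintegral_centre_le {a : ℝ} (ha : 0 ≤ a) (t s u : ℝ) :
    ∫⁻ c, leInd |s - c| (|t - c| / 32) * (leInd |u - c| (|t - c| / 32) *
        ENNReal.ofReal (|t - c| ^ a)) ≤
      leInd |u - s| (|t - s| / 8) * ENNReal.ofReal (2 ^ a * |t - s| ^ (a + 1)) := by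
  have hts := abs_nonneg (t - s)
  calc _ ≤ ∫⁻ c, leInd |s - c| (|t - s| / 31) *
          (leInd |u - s| (|t - s| / 8) * ENNReal.ofReal ((2 * |t - s|) ^ a)) := by
        refine lintegral_mono fun c ↦ leInd_mul_le_leInd_mul fun hs ↦ ?_
        have htc : |t - c| ≤ |t - s| + |s - c| := abs_sub_le t s c
        refine ⟨by linarith, leInd_mul_le_leInd_mul fun hu ↦ ?_⟩
        have hus : |u - s| ≤ |u - c| + |s - c| := abs_sub_comm s c ▸ abs_sub_le u c s
        refine ⟨by linarith, ?_⟩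
        gcongr
        linarith
    _ = ENNReal.ofReal (2 * (|t - s| / 31)) *
          (leInd |u - s| (|t - s| / 8) * ENNReal.ofReal ((2 * |t - s|) ^ a)) := by
        rw [lintegral_mul_const _ (by fun_prop), lintegral_leInd_abs_sub]
    _ = leInd |u - s| (|t - s| / 8) *
          ENNReal.ofReal (2 / 31 * (2 ^ a * |t - s| ^ (a + 1))) := by
        rw [mul_left_comm, ← ENNReal.ofReal_mul (by positivity), Real.mul_rpow zero_le_two hts,
          Real.rpow_add_one' hts (by positivity)]
        congr 2
        ring
    _ ≤ _ := by
        exact mul_le_mul_right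
          (ENNReal.ofReal_le_ofReal (mul_le_of_le_one_left (by positivity) (by norm_num))) _

theorem ofReal_rpow_le_lintegral_energy {β : ℝ} (hβ : 0 ≤ β) (he : Measurable e)
    (he1 : ∀ x, e x ≤ 1) (hy : 0 ≤ y) (hV : ∫⁻ x, e x = ENNReal.ofReal y) :
    ENNReal.ofReal (y * ((y / 4) ^ β * (y / 2))) ≤
      ∫⁻ s, ∫⁻ u, e s * e u * ENNReal.ofReal (|u - s| ^ β) := by
  have hslice : ∀ s, ENNReal.ofReal ((y / 4) ^ β * (y / 2)) ≤
      ∫⁻ u, e u * ENNReal.ofReal (|u - s| ^ β) := fun s ↦ by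
    rw [ENNReal.ofReal_mul (by positivity)]
    grw [ofReal_half_le_lintegral_far he1 hy hV s]
    rw [← lintegral_const_mul _ (by fun_prop)]
    refine lintegral_mono fun u ↦ ?_
    rcases lt_or_ge |u - s| (y / 4) with h | h
    · simp [leInd_of_lt h]
    · rw [leInd_of_le h, mul_one, mul_comm]
      gcongr
  rw [ENNReal.ofReal_mul hy, ← hV, ← lintegral_mul_const _ he]
  refine lintegral_mono fun s ↦ (mul_le_mul_right (hslice s) _).trans_eq ?_
  rw [← lintegral_const_mul _ (by fun_prop)]
  exact lintegral_congr fun u ↦ (mul_assoc _ _ _).symm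

theorem lintegral_le_ofReal_add_energy {β θ : ℝ} (hβ : 0 ≤ β) (he : Measurable e)
    (he1 : ∀ x, e x ≤ 1) (hfin : ∫⁻ x, e x ≠ ∞) (hθ : 0 < θ) :
    ∫⁻ x, e x ≤ ENNReal.ofReal θ + ENNReal.ofReal (2 * 4 ^ β * θ ^ (-1 - β)) *
      ∫⁻ s, ∫⁻ u, e s * e u * ENNReal.ofReal (|u - s| ^ β) := by
  obtain ⟨y, hy, hV⟩ : ∃ y : ℝ, 0 ≤ y ∧ ∫⁻ x, e x = ENNReal.ofReal y :=
    ⟨_, ENNReal.toReal_nonneg, (ENNReal.ofReal_toReal hfin).symm⟩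
  rw [hV]
  rcases le_or_gt y θ with hyθ | hyθ
  · exact le_add_right (ENNReal.ofReal_le_ofReal hyθ)
  refine le_add_left ?_
  grw [← ofReal_rpow_le_lintegral_energy hβ he he1 hy hV]
  rw [← ENNReal.ofReal_mul (by positivity)]
  refine ENNReal.ofReal_le_ofReal ?_
  have hratio : 1 ≤ θ ^ (-1 - β) * y ^ (1 + β) := by
    rw [show -1 - β = -(1 + β) by ring, Real.rpow_neg hθ.le, inv_mul_eq_div,
      one_le_div₀ (by positivity)]
    gcongr
  calc y ≤ y * (θ ^ (-1 - β) * y ^ (1 + β)) := le_mul_of_one_le_right hy hratio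
    _ = 2 * 4 ^ β * θ ^ (-1 - β) * (y * ((y / 4) ^ β * (y / 2))) := by
      rw [Real.div_rpow hy (by norm_num), Real.rpow_one_add' hy (by positivity)]
      field_simp

/-- The density of the points `s` for which both `s` and `t - ρ (t - s)` belong to `e`, localised
to a small neighbourhood of the centre `c` on the scale `|t - c|`. -/
def localPair (e : ℝ → ℝ≥0∞) (t ρ c s : ℝ) : ℝ≥0∞ :=
  e s * e (t - ρ * (t - s)) * leInd |s - c| (|t - c| / 32)

@[fun_prop]
theorem measurable_localPair {α : Type*} [MeasurableSpace α] (he : Measurable e)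
    {t ρ c s : α → ℝ} (ht : Measurable t) (hρ : Measurable ρ) (hc : Measurable c)
    (hs : Measurable s) : Measurable fun x ↦ localPair e (t x) (ρ x) (c x) (s x) := by
  unfold localPair
  fun_prop

theorem localPair_le (he1 : ∀ x, e x ≤ 1) (t ρ c s : ℝ) : localPair e t ρ c s ≤ e s :=
  calc localPair e t ρ c s ≤ e s * 1 * 1 := by
        unfold localPair
        gcongr
        exacts [he1 _, leInd_le_one _ _]
    _ = e s := by ring

/-- The weighted number of configurations `(t, ρ, s, u)` for which the five times `t`, `s`, `u`,
`t - ρ (t - s)`, `t - ρ (t - u)` all belong to `e`; these are the times at which the incidence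
estimate is applied, and the weight controls the Jacobian there. -/
def fiveTimesForm (β : ℝ) (e : ℝ → ℝ≥0∞) : ℝ≥0∞ :=
  ∫⁻ t, ∫⁻ ρ, ∫⁻ s, ∫⁻ u, e t * e s * e u * e (t - ρ * (t - s)) * e (t - ρ * (t - u)) *
    (leInd |ρ| (1 / 2) * leInd |u - s| (|t - s| / 8) *
      ENNReal.ofReal (|u - s| ^ β * |ρ| ^ β * |t - s| ^ (3 * β + 2)))

theorem lintegral_triple_le_localPair (he : Measurable e) (hy : 0 < y) (t s : ℝ) :
    ∫⁻ τ, e t * e s * e τ * (leInd |t - τ| (|t - s| / 2) * leInd (y / 4) |t - s|) ≤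
      17 * ∫⁻ ρ, ∫⁻ c, e t * leInd |ρ| (1 / 2) * leInd (y / 5) |t - c| * localPair e t ρ c s := by
  by_cases hts : t - s = 0
  · simp [hts, leInd_of_lt (show 0 < y / 4 by positivity)]
  calc ∫⁻ τ, e t * e s * e τ * (leInd |t - τ| (|t - s| / 2) * leInd (y / 4) |t - s|)
      = e t * e s * leInd (y / 4) |t - s| * ∫⁻ τ, e τ * leInd |t - τ| (|t - s| / 2) := by
        rw [← lintegral_const_mul _ (by fun_prop)]
        exact lintegral_congr fun τ ↦ by ring
    _ = e t * e s * (leInd (y / 4) |t - s| * ENNReal.ofReal |t - s|) *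
          ∫⁻ ρ, e (t - ρ * (t - s)) * leInd |ρ| (1 / 2) := by
        rw [lintegral_mul_leInd_eq_smul e hts]
        ring
    _ ≤ e t * e s * (17 * ∫⁻ c, leInd |s - c| (|t - c| / 32) * leInd (y / 5) |t - c|) *
          ∫⁻ ρ, e (t - ρ * (t - s)) * leInd |ρ| (1 / 2) :=
        mul_le_mul_left (mul_le_mul_right (leInd_mul_ofReal_le_lintegral_centre y t s) _) _
    _ = 17 * (e t * e s * ((∫⁻ ρ, e (t - ρ * (t - s)) * leInd |ρ| (1 / 2)) *
          ∫⁻ c, leInd |s - c| (|t - c| / 32) * leInd (y / 5) |t - c|)) := by ring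
    _ = _ := by
        congr 1
        rw [← lintegral_mul_const _ (by fun_prop), ← lintegral_const_mul _ (by fun_prop)]
        refine lintegral_congr fun ρ ↦ ?_
        rw [← lintegral_const_mul _ (by fun_prop), ← lintegral_const_mul _ (by fun_prop)]
        refine lintegral_congr fun c ↦ ?_
        unfold localPair
        ring

theorem ofReal_pow_three_le_lintegral_localPair (he : Measurable e) (he1 : ∀ x, e x ≤ 1)
    (hy : 0 < y) (hV : ∫⁻ x, e x = ENNReal.ofReal y) :
    ENNReal.ofReal (y ^ 3) ≤ 204 * ∫⁻ t, ∫⁻ ρ, ∫⁻ c,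
      e t * leInd |ρ| (1 / 2) * leInd (y / 5) |t - c| * ∫⁻ s, localPair e t ρ c s :=
  calc ENNReal.ofReal (y ^ 3)
      ≤ 12 * ∫⁻ t, ∫⁻ s, 17 * ∫⁻ ρ, ∫⁻ c,
          e t * leInd |ρ| (1 / 2) * leInd (y / 5) |t - c| * localPair e t ρ c s := by
        grw [ofReal_pow_three_le_lintegral_triples he he1 hy.le hV]
        exact mul_le_mul_right (lintegral_mono fun t ↦ lintegral_mono fun s ↦
          lintegral_triple_le_localPair he hy t s) _
    _ = 204 * ∫⁻ t, ∫⁻ s, ∫⁻ ρ, ∫⁻ c,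
          e t * leInd |ρ| (1 / 2) * leInd (y / 5) |t - c| * localPair e t ρ c s := by
        simp only [lintegral_const_mul' _ _ (ofNat_ne_top (n := 17)), ← mul_assoc]
        norm_num
    _ = _ := by
        congr 1
        refine lintegral_congr fun t ↦ ?_
        rw [lintegral_lintegral_swap (by fun_prop)]
        refine lintegral_congr fun ρ ↦ ?_
        rw [lintegral_lintegral_swap (by fun_prop)]
        exact lintegral_congr fun c ↦ lintegral_const_mul _ (by fun_prop)

theorem lintegral_centre_localPair_le {β : ℝ} (hβ : 0 ≤ β) (t ρ s u : ℝ) :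
    ∫⁻ c, e t * leInd |ρ| (1 / 2) * ENNReal.ofReal (|ρ| ^ β * |t - c| ^ (3 * β + 1)) *
        (localPair e t ρ c s * localPair e t ρ c u * ENNReal.ofReal (|u - s| ^ β)) ≤
      ENNReal.ofReal (2 ^ (3 * β + 1)) *
        (e t * e s * e u * e (t - ρ * (t - s)) * e (t - ρ * (t - u)) *
          (leInd |ρ| (1 / 2) * leInd |u - s| (|t - s| / 8) *
            ENNReal.ofReal (|u - s| ^ β * |ρ| ^ β * |t - s| ^ (3 * β + 2)))) := by
  set A := e t * e s * e u * e (t - ρ * (t - s)) * e (t - ρ * (t - u)) *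
    leInd |ρ| (1 / 2) * ENNReal.ofReal (|u - s| ^ β * |ρ| ^ β) with hA
  calc _ = ∫⁻ c, A * (leInd |s - c| (|t - c| / 32) * (leInd |u - c| (|t - c| / 32) *
          ENNReal.ofReal (|t - c| ^ (3 * β + 1)))) := by
        refine lintegral_congr fun c ↦ ?_
        rw [hA, localPair, localPair, ENNReal.ofReal_mul (by positivity),
          ENNReal.ofReal_mul (by positivity)]
        ring
    _ = A * ∫⁻ c, leInd |s - c| (|t - c| / 32) * (leInd |u - c| (|t - c| / 32) *
          ENNReal.ofReal (|t - c| ^ (3 * β + 1))) := lintegral_const_mul _ (by fun_prop)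
    _ ≤ A * (leInd |u - s| (|t - s| / 8) *
          ENNReal.ofReal (2 ^ (3 * β + 1) * |t - s| ^ (3 * β + 1 + 1))) := by
        grw [lintegral_centre_le (by positivity)]
    _ = _ := by
        rw [hA, ENNReal.ofReal_mul (p := 2 ^ (3 * β + 1)) (by positivity),
          ENNReal.ofReal_mul (p := |u - s| ^ β * |ρ| ^ β) (by positivity),
          show 3 * β + 1 + 1 = 3 * β + 2 by ring]
        ring

theorem lintegral_localPair_energy_le {β : ℝ} (hβ : 0 ≤ β) (he : Measurable e) :
    ∫⁻ t, ∫⁻ ρ, ∫⁻ c, e t * leInd |ρ| (1 / 2) *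
        ENNReal.ofReal (|ρ| ^ β * |t - c| ^ (3 * β + 1)) *
        ∫⁻ s, ∫⁻ u, localPair e t ρ c s * localPair e t ρ c u * ENNReal.ofReal (|u - s| ^ β) ≤
      ENNReal.ofReal (2 ^ (3 * β + 1)) * fiveTimesForm β e := by
  simp only [fiveTimesForm, ← lintegral_const_mul' _ _ ENNReal.ofReal_ne_top]
  refine lintegral_mono fun t ↦ lintegral_mono fun ρ ↦ ?_
  calc ∫⁻ c, e t * leInd |ρ| (1 / 2) * ENNReal.ofReal (|ρ| ^ β * |t - c| ^ (3 * β + 1)) *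
        ∫⁻ s, ∫⁻ u, localPair e t ρ c s * localPair e t ρ c u * ENNReal.ofReal (|u - s| ^ β)
      = ∫⁻ c, ∫⁻ s, ∫⁻ u, e t * leInd |ρ| (1 / 2) *
          ENNReal.ofReal (|ρ| ^ β * |t - c| ^ (3 * β + 1)) *
          (localPair e t ρ c s * localPair e t ρ c u * ENNReal.ofReal (|u - s| ^ β)) := by
        refine lintegral_congr fun c ↦ ?_
        rw [← lintegral_const_mul _ (by fun_prop)]
        exact lintegral_congr fun s ↦ (lintegral_const_mul _ (by fun_prop)).symm
    _ = ∫⁻ s, ∫⁻ u, ∫⁻ c, e t * leInd |ρ| (1 / 2) *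
          ENNReal.ofReal (|ρ| ^ β * |t - c| ^ (3 * β + 1)) *
          (localPair e t ρ c s * localPair e t ρ c u * ENNReal.ofReal (|u - s| ^ β)) := by
        rw [lintegral_lintegral_swap (by fun_prop)]
        exact lintegral_congr fun s ↦ lintegral_lintegral_swap (by fun_prop)
    _ ≤ _ := lintegral_mono fun s ↦ lintegral_mono fun u ↦ lintegral_centre_localPair_le hβ t ρ s u

/-- The threshold of `lintegral_le_ofReal_add_energy` is taken to be a product of powers of `|ρ|`
and `|t - c|`, both integrable over the relevant range, such that the energy acquires exactly the
weight of `fiveTimesForm`. -/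
theorem lintegral_localPair_le {β δ : ℝ} (hβ : 0 ≤ β) (hδ : 0 < δ) (he : Measurable e)
    (he1 : ∀ x, e x ≤ 1) (hfin : ∫⁻ x, e x ≠ ∞) (hy : 0 < y) (t c : ℝ) {ρ : ℝ} (hρ : ρ ≠ 0) :
    e t * leInd |ρ| (1 / 2) * leInd (y / 5) |t - c| * ∫⁻ s, localPair e t ρ c s ≤
      e t * (leInd |ρ| (1 / 2) * ENNReal.ofReal (δ * |ρ| ^ (-1 + 1 / (1 + β)))) *
        (leInd (y / 5) |t - c| * ENNReal.ofReal (|t - c| ^ (-1 - 2 * β / (1 + β)))) +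
      ENNReal.ofReal (2 * 4 ^ β * δ ^ (-1 - β)) *
        (e t * leInd |ρ| (1 / 2) * ENNReal.ofReal (|ρ| ^ β * |t - c| ^ (3 * β + 1)) *
          ∫⁻ s, ∫⁻ u, localPair e t ρ c s * localPair e t ρ c u *
            ENNReal.ofReal (|u - s| ^ β)) := by
  rcases lt_or_ge |t - c| (y / 5) with htc | htc
  · simp [leInd_of_lt htc]
  have hρ0 : 0 < |ρ| := abs_pos.2 hρ
  have htc0 : 0 < |t - c| := htc.trans_lt' (by positivity)
  have hpair : ∀ s, localPair e t ρ c s ≤ e s := localPair_le he1 t ρ c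
  have hmain := lintegral_le_ofReal_add_energy
    (θ := δ * (|ρ| ^ (-1 + 1 / (1 + β)) * |t - c| ^ (-1 - 2 * β / (1 + β))))
    hβ (e := localPair e t ρ c) (by fun_prop) (fun s ↦ (hpair s).trans (he1 s))
    (ne_top_of_le_ne_top hfin (lintegral_mono hpair)) (by positivity)
  have hθ : (δ * (|ρ| ^ (-1 + 1 / (1 + β)) * |t - c| ^ (-1 - 2 * β / (1 + β)))) ^ (-1 - β) =
      δ ^ (-1 - β) * (|ρ| ^ β * |t - c| ^ (3 * β + 1)) := by
    have hβ1 : 1 + β ≠ 0 := by positivity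
    rw [Real.mul_rpow hδ.le (by positivity), Real.mul_rpow (by positivity) (by positivity),
      ← Real.rpow_mul hρ0.le, ← Real.rpow_mul htc0.le]
    congr 3 <;> field_simp <;> ring
  rw [hθ] at hmain
  rw [leInd_of_le htc]
  refine (mul_le_mul_right hmain _).trans_eq ?_
  rw [← mul_assoc δ, ENNReal.ofReal_mul (p := δ * |ρ| ^ (-1 + 1 / (1 + β))) (by positivity),
    ← mul_assoc (2 * 4 ^ β),
    ENNReal.ofReal_mul (p := 2 * 4 ^ β * δ ^ (-1 - β)) (by positivity)]
  ring

theorem lintegral_threshold_le {η κ K δ : ℝ} (hκ : 0 < κ) (hδ : 0 ≤ δ) (he : Measurable e)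
    (hy : 0 < y) (hV : ∫⁻ x, e x = ENNReal.ofReal y)
    (hK : ∫⁻ x, leInd |x - 0| 1 * ENNReal.ofReal (|x - 0| ^ (-1 + η)) ≤ ENNReal.ofReal K) :
    ∫⁻ t, ∫⁻ ρ, ∫⁻ c, e t * (leInd |ρ| (1 / 2) * ENNReal.ofReal (δ * |ρ| ^ (-1 + η))) *
        (leInd (y / 5) |t - c| * ENNReal.ofReal (|t - c| ^ (-1 - κ))) ≤
      ENNReal.ofReal (y * (δ * K) * (2 / κ * (y / 5) ^ (-κ))) :=
  calc ∫⁻ t, ∫⁻ ρ, ∫⁻ c, e t * (leInd |ρ| (1 / 2) * ENNReal.ofReal (δ * |ρ| ^ (-1 + η))) *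
        (leInd (y / 5) |t - c| * ENNReal.ofReal (|t - c| ^ (-1 - κ)))
      = ∫⁻ t, e t * (∫⁻ ρ, leInd |ρ| (1 / 2) * ENNReal.ofReal (δ * |ρ| ^ (-1 + η))) *
          ENNReal.ofReal (2 / κ * (y / 5) ^ (-κ)) := by
        refine lintegral_congr fun t ↦ ?_
        rw [← lintegral_const_mul _ (by fun_prop), ← lintegral_mul_const _ (by fun_prop),
          ← lintegral_rpow_far hκ (by positivity) t]
        exact lintegral_congr fun ρ ↦ lintegral_const_mul _ (by fun_prop)
    _ ≤ ∫⁻ t, e t * (ENNReal.ofReal δ * ENNReal.ofReal K) *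
          ENNReal.ofReal (2 / κ * (y / 5) ^ (-κ)) := by
        gcongr with t
        grw [← hK]
        rw [← lintegral_const_mul _ (by fun_prop)]
        refine lintegral_mono fun ρ ↦ ?_
        rw [sub_zero, mul_left_comm, ← ENNReal.ofReal_mul hδ]
        exact leInd_mul_le_leInd_mul fun hρ ↦ ⟨by linarith, le_rfl⟩
    _ = ENNReal.ofReal (y * (δ * K) * (2 / κ * (y / 5) ^ (-κ))) := by
        rw [lintegral_mul_const _ (by fun_prop), lintegral_mul_const _ he, hV,
          ← ENNReal.ofReal_mul hδ, ← ENNReal.ofReal_mul hy.le,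
          ← ENNReal.ofReal_mul' (by positivity)]

theorem exists_ofReal_pow_three_le_add_fiveTimesForm {β : ℝ} (hβ : 0 < β) :
    ∃ A B : ℝ, 0 < A ∧ 0 < B ∧ ∀ {e : ℝ → ℝ≥0∞} {y δ : ℝ}, Measurable e → (∀ x, e x ≤ 1) →
      0 < y → ∫⁻ x, e x = ENNReal.ofReal y → 0 < δ →
      ENNReal.ofReal (y ^ 3) ≤ ENNReal.ofReal (A * δ * y ^ (1 - 2 * β / (1 + β))) +
        ENNReal.ofReal (B * δ ^ (-1 - β)) * fiveTimesForm β e := by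
  obtain ⟨K, hK0, hK⟩ := exists_lintegral_rpow_near_le (η := 1 / (1 + β)) (by positivity)
  set κ := 2 * β / (1 + β)
  have hκ0 : 0 < κ := by positivity
  refine ⟨204 * (K * (2 / κ * 5 ^ κ)), 204 * (2 * 4 ^ β * 2 ^ (3 * β + 1)), by positivity,
    by positivity, fun {e y δ} he he1 hy hV hδ ↦ ?_⟩
  have hsplit : ∫⁻ t, ∫⁻ ρ, ∫⁻ c,
        e t * leInd |ρ| (1 / 2) * leInd (y / 5) |t - c| * ∫⁻ s, localPair e t ρ c s ≤
      ENNReal.ofReal (y * (δ * K) * (2 / κ * (y / 5) ^ (-κ))) +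
        ENNReal.ofReal (2 * 4 ^ β * δ ^ (-1 - β)) *
          (ENNReal.ofReal (2 ^ (3 * β + 1)) * fiveTimesForm β e) := by
    grw [← lintegral_threshold_le hκ0 hδ.le he hy hV (hK 0),
      ← lintegral_localPair_energy_le hβ.le he]
    simp only [← lintegral_const_mul' _ _ ENNReal.ofReal_ne_top]
    rw [← lintegral_add_left (by fun_prop)]
    refine lintegral_mono fun t ↦ ?_
    rw [← lintegral_add_left (by fun_prop)]
    refine lintegral_mono_ae ?_
    filter_upwards [Measure.ae_ne volume 0] with ρ hρ
    rw [← lintegral_add_left (by fun_prop)]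
    exact lintegral_mono fun c ↦
      lintegral_localPair_le hβ.le hδ he he1 (hV ▸ ENNReal.ofReal_ne_top) hy t c hρ
  grw [ofReal_pow_three_le_lintegral_localPair he he1 hy hV, hsplit]
  have hthreshold : 204 * (K * (2 / κ * 5 ^ κ)) * δ * y ^ (1 - κ) =
      204 * (y * (δ * K) * (2 / κ * (y / 5) ^ (-κ))) := by
    rw [Real.div_rpow hy.le (by norm_num), Real.rpow_neg hy.le, Real.rpow_neg (by norm_num),
      Real.rpow_sub hy, Real.rpow_one]
    field_simp
  have henergy : 204 * (2 * 4 ^ β * 2 ^ (3 * β + 1)) * δ ^ (-1 - β) =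
      204 * (2 * 4 ^ β * δ ^ (-1 - β) * 2 ^ (3 * β + 1)) := by ring
  rw [hthreshold, henergy, ENNReal.ofReal_mul (p := 204) (by norm_num),
    ENNReal.ofReal_mul (p := 204) (by norm_num),
    ENNReal.ofReal_mul (p := 2 * 4 ^ β * δ ^ (-1 - β)) (by positivity), ENNReal.ofReal_ofNat]
  exact le_of_eq (by ring)

theorem exists_ofReal_rpow_le_fiveTimesForm {β : ℝ} (hβ : 0 < β) :
    ∃ K : ℝ, 0 < K ∧ ∀ {e : ℝ → ℝ≥0∞} {y : ℝ}, Measurable e → (∀ x, e x ≤ 1) → 0 < y →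
      ∫⁻ x, e x = ENNReal.ofReal y →
      ENNReal.ofReal (y ^ (5 + 4 * β)) ≤ ENNReal.ofReal K * fiveTimesForm β e := by
  obtain ⟨A, B, hA, hB, hAB⟩ := exists_ofReal_pow_three_le_add_fiveTimesForm hβ
  refine ⟨2 * B * (2 * A) ^ (1 + β), by positivity, fun {e y} he he1 hy hV ↦ ?_⟩
  set κ := 2 * β / (1 + β) with hκ
  have hβ1 : 1 + β ≠ 0 := by positivity
  set δ := y ^ (2 + κ) / (2 * A) with hδ
  have hδ0 : 0 < δ := by positivity
  have hhalf : A * δ * y ^ (1 - κ) = y ^ 3 / 2 := by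
    rw [hδ, ← Real.rpow_natCast, show ((3 : ℕ) : ℝ) = 2 + κ + (1 - κ) by push_cast; ring,
      Real.rpow_add hy (2 + κ)]
    field_simp
  have hmain : ENNReal.ofReal (y ^ 3) ≤
      2 * (ENNReal.ofReal (B * δ ^ (-1 - β)) * fiveTimesForm β e) := by
    refine le_two_mul_of_le_half_add ENNReal.ofReal_ne_top ?_
    rw [← ENNReal.ofReal_ofNat 2, ← ENNReal.ofReal_div_of_pos two_pos, ← hhalf]
    exact hAB he he1 hy hV hδ0
  have hpow : y ^ (2 + 4 * β) * δ ^ (-1 - β) = (2 * A) ^ (1 + β) := by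
    rw [hδ, Real.div_rpow (by positivity) (by positivity), ← Real.rpow_mul hy.le,
      show (2 + κ) * (-1 - β) = -(2 + 4 * β) by rw [hκ]; field_simp; ring,
      show -1 - β = -(1 + β) by ring, Real.rpow_neg hy.le, Real.rpow_neg (by positivity)]
    field_simp
  calc ENNReal.ofReal (y ^ (5 + 4 * β))
      = ENNReal.ofReal (y ^ (2 + 4 * β)) * ENNReal.ofReal (y ^ 3) := by
        rw [← ENNReal.ofReal_mul (by positivity), ← Real.rpow_natCast, ← Real.rpow_add hy]
        congr 2
        push_cast
        ring
    _ ≤ ENNReal.ofReal (y ^ (2 + 4 * β)) *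
          (2 * (ENNReal.ofReal (B * δ ^ (-1 - β)) * fiveTimesForm β e)) := by gcongr
    _ = ENNReal.ofReal (2 * B * (2 * A) ^ (1 + β)) * fiveTimesForm β e := by
        rw [← hpow, show 2 * B * (y ^ (2 + 4 * β) * δ ^ (-1 - β)) =
            y ^ (2 + 4 * β) * (2 * (B * δ ^ (-1 - β))) by ring,
          ENNReal.ofReal_mul (p := y ^ (2 + 4 * β)) (by positivity),
          ENNReal.ofReal_mul (p := 2) zero_le_two, ENNReal.ofReal_ofNat]
        ring

end OneDimensional

/-! ### The restricted estimate -/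

/-- The kernel `|x| ^ (a - 1)` cut off to `|x| ≤ 1`, integrable for `0 < a`. -/
def singularKernel (a x : ℝ) : ℝ≥0∞ := leInd |x| 1 * ENNReal.ofReal (|x| ^ (-1 + a))

@[fun_prop]
theorem measurable_singularKernel (a : ℝ) : Measurable (singularKernel a) := by
  unfold singularKernel
  fun_prop

theorem singularKernel_of_le {a x : ℝ} (hx : |x| ≤ 1) :
    singularKernel a x = ENNReal.ofReal (|x| ^ (-1 + a)) := by
  rw [singularKernel, leInd_of_le hx, one_mul]

theorem lintegral_singularKernel_ne_top {a : ℝ} (ha : 0 < a) : ∫⁻ x, singularKernel a x ≠ ∞ := by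
  obtain ⟨K, -, hK⟩ := exists_lintegral_rpow_near_le ha
  exact ne_top_of_le_ne_top ENNReal.ofReal_ne_top (by simpa [singularKernel] using hK 0)

theorem lintegral₃_mul_kernel_middle {F k₁ k₂ : ℝ → ℝ≥0∞} (hF : Measurable F)
    (hk₁ : Measurable k₁) (hk₂ : Measurable k₂) :
    ∫⁻ t, ∫⁻ s, ∫⁻ u, F s * (k₁ (u - s) * k₂ (t - s)) =
      (∫⁻ x, k₁ x) * (∫⁻ x, k₂ x) * ∫⁻ x, F x := by
  have hu : ∀ t s, ∫⁻ u, F s * (k₁ (u - s) * k₂ (t - s)) =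
      F s * (∫⁻ x, k₁ x) * k₂ (t - s) := fun t s ↦ by
    rw [lintegral_const_mul _ (by fun_prop), lintegral_mul_const _ (by fun_prop),
      lintegral_sub_right_eq_self k₁, mul_assoc]
  simp only [hu]
  rw [lintegral_lintegral_swap (by fun_prop), ← lintegral_const_mul _ hF]
  refine lintegral_congr fun s ↦ ?_
  rw [lintegral_const_mul _ (by fun_prop), lintegral_sub_right_eq_self k₂]
  ring

theorem lintegral₃_mul_kernel_outer {F k₁ k₂ : ℝ → ℝ≥0∞} (hF : Measurable F)
    (hk₁ : Measurable k₁) (hk₂ : Measurable k₂) :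
    ∫⁻ t, ∫⁻ s, ∫⁻ u, F t * (k₁ (u - s) * k₂ (t - s)) =
      (∫⁻ x, k₁ x) * (∫⁻ x, k₂ x) * ∫⁻ x, F x := by
  have hu : ∀ t s, ∫⁻ u, F t * (k₁ (u - s) * k₂ (t - s)) =
      F t * (∫⁻ x, k₁ x) * k₂ (t - s) := fun t s ↦ by
    rw [lintegral_const_mul _ (by fun_prop), lintegral_mul_const _ (by fun_prop),
      lintegral_sub_right_eq_self k₁, mul_assoc]
  simp only [hu]
  rw [← lintegral_const_mul _ hF]
  refine lintegral_congr fun t ↦ ?_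
  rw [lintegral_const_mul _ (by fun_prop), lintegral_sub_left_eq_self k₂]
  ring

theorem lintegral₃_mul_kernel_inner {F k₁ k₂ : ℝ → ℝ≥0∞} (hF : Measurable F)
    (hk₁ : Measurable k₁) (hk₂ : Measurable k₂) :
    ∫⁻ t, ∫⁻ s, ∫⁻ u, F u * (k₁ (u - s) * k₂ (t - s)) =
      (∫⁻ x, k₁ x) * (∫⁻ x, k₂ x) * ∫⁻ x, F x := by
  have ht : ∀ s u, ∫⁻ t, F u * (k₁ (u - s) * k₂ (t - s)) =
      F u * (∫⁻ x, k₂ x) * k₁ (u - s) := fun s u ↦ by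
    rw [lintegral_const_mul _ (by fun_prop), lintegral_const_mul _ (by fun_prop),
      lintegral_sub_right_eq_self k₂]
    ring
  rw [lintegral_lintegral_swap (by fun_prop),
    lintegral_congr fun s ↦ lintegral_lintegral_swap (by fun_prop)]
  simp only [ht]
  rw [lintegral_lintegral_swap (by fun_prop), ← lintegral_const_mul _ hF]
  refine lintegral_congr fun u ↦ ?_
  rw [lintegral_const_mul _ (by fun_prop), lintegral_sub_left_eq_self k₁]
  ring

theorem lintegral₃_mul_kernel {F k₁ k₂ : ℝ → ℝ≥0∞} (hF : Measurable F) (hk₁ : Measurable k₁)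
    (hk₂ : Measurable k₂) :
    ∫⁻ t, ∫⁻ s, ∫⁻ u, (F s + F t + F u) * (k₁ (u - s) * k₂ (t - s)) =
      3 * (∫⁻ x, k₁ x) * (∫⁻ x, k₂ x) * ∫⁻ x, F x := by
  simp only [add_mul]
  rw [lintegral₃_add_right volume
      (fun z ↦ F z.2.1 * (k₁ (z.2.2 - z.2.1) * k₂ (z.1 - z.2.1)) +
        F z.1 * (k₁ (z.2.2 - z.2.1) * k₂ (z.1 - z.2.1)))
      (T := fun z ↦ F z.2.2 * (k₁ (z.2.2 - z.2.1) * k₂ (z.1 - z.2.1))) (by fun_prop),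
    lintegral₃_add_right volume (fun z ↦ F z.2.1 * (k₁ (z.2.2 - z.2.1) * k₂ (z.1 - z.2.1)))
      (T := fun z ↦ F z.1 * (k₁ (z.2.2 - z.2.1) * k₂ (z.1 - z.2.1))) (by fun_prop),
    lintegral₃_mul_kernel_middle hF hk₁ hk₂, lintegral₃_mul_kernel_outer hF hk₁ hk₂,
    lintegral₃_mul_kernel_inner hF hk₁ hk₂]
  ring

/-- The time slice `{x | (x, t) ∈ E}` of a set in space-time. -/
def timeSlice {V : Type*} (E : Set (V × ℝ)) (t : ℝ) : Set V := (·, t) ⁻¹' E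

theorem measurableSet_timeSlice {V : Type*} [MeasurableSpace V] {E : Set (V × ℝ)}
    (hE : MeasurableSet E) (t : ℝ) : MeasurableSet (timeSlice E t) :=
  measurable_prodMk_right hE

theorem measurable_volume_timeSlice {V : Type*} [MeasureSpace V] [SFinite (volume : Measure V)]
    {E : Set (V × ℝ)} (hE : MeasurableSet E) : Measurable fun t ↦ volume (timeSlice E t) :=
  measurable_measure_prodMk_right hE

theorem lintegral_volume_timeSlice {V : Type*} [MeasureSpace V] [SFinite (volume : Measure V)]
    {E : Set (V × ℝ)} (hE : MeasurableSet E) : ∫⁻ t, volume (timeSlice E t) = volume E :=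
  (Measure.prod_apply_symm hE).symm

theorem volume_setOf_div_le_volume_timeSlice_le {V : Type*} [MeasureSpace V]
    [SFinite (volume : Measure V)] {E : Set (V × ℝ)} (hE : MeasurableSet E) {v y : ℝ≥0∞}
    (hv : volume E ≤ v) (hv0 : v ≠ 0) (hv' : v ≠ ∞) (hy0 : y ≠ 0) (hy' : y ≠ ∞) :
    volume {t | v / y ≤ volume (timeSlice E t)} ≤ y :=
  calc volume {t | v / y ≤ volume (timeSlice E t)}
      ≤ (∫⁻ t, volume (timeSlice E t)) / (v / y) :=
        meas_ge_le_lintegral_div (measurable_volume_timeSlice hE).aemeasurable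
          (ENNReal.div_ne_zero.2 ⟨hv0, hy'⟩) (ENNReal.div_ne_top hv' hy0)
    _ ≤ v / (v / y) := by rw [lintegral_volume_timeSlice hE]; gcongr
    _ = y := ENNReal.div_div_cancel hv0 hv'

theorem rpow_pow_four_inv (x : ℝ≥0∞) : (x ^ 4) ^ (1 / 4 : ℝ) = x := by
  rw [← ENNReal.rpow_natCast, ← ENNReal.rpow_mul]
  norm_num

theorem abs_mul_abs_mul_abs_pow_three_le {s t u ρ : ℝ} (hρ : |ρ| ≤ 1 / 2)
    (hus : |u - s| ≤ |t - s| / 8) :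
    |u - s| * |ρ| * |t - s| ^ 3 ≤
      8 * |(u - s) * (t - s) * ρ * (t - u) * (1 - ρ) * (t - ρ * (t - u) - s)| := by
  have htu : 7 / 8 * |t - s| ≤ |t - u| := by grind
  have htu' : |t - u| ≤ 9 / 8 * |t - s| := by grind
  have hρ1 : 1 / 2 ≤ |1 - ρ| := by grind
  have hlast : 7 / 16 * |t - s| ≤ |t - ρ * (t - u) - s| := by
    have hmul : |ρ * (t - u)| ≤ 1 / 2 * (9 / 8 * |t - s|) := by
      rw [abs_mul]
      gcongr
    grind
  have hprod : 7 / 8 * |t - s| * (1 / 2) * (7 / 16 * |t - s|) ≤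
      |t - u| * |1 - ρ| * |t - ρ * (t - u) - s| := by gcongr
  calc |u - s| * |ρ| * |t - s| ^ 3 = |u - s| * |ρ| * |t - s| * |t - s| ^ 2 := by ring
    _ ≤ |u - s| * |ρ| * |t - s| * (8 * (|t - u| * |1 - ρ| * |t - ρ * (t - u) - s|)) := by
        gcongr
        linarith [sq_nonneg |t - s|]
    _ = _ := by
        simp only [abs_mul]
        ring

section Incidence

variable {V : Type*} [NormedAddCommGroup V] [NormedSpace ℝ V] [FiniteDimensional ℝ V]
  [MeasureSpace V] [BorelSpace V] [(volume : Measure V).IsAddHaarMeasure]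
  {G : Set (V × V)} {M B : ℝ≥0∞} {s t u ρ : ℝ}

theorem ofReal_rpow_mul_volume_le {F : ℝ → Set V} (hG : MeasurableSet G)
    (hM : ∀ ξ, volume (Prod.mk ξ ⁻¹' G) ≤ M) (hF : ∀ a, MeasurableSet (F a))
    (hB : ∀ a, volume (F a) ≤ B)
    (hmeet : ∀ a ∈ ({s, t, u, t - ρ * (t - s), t - ρ * (t - u)} : Set ℝ),
      MapsTo (linePoint · a) G (F a))
    (hne : (u - s) * (t - s) * ρ * (t - u) * (1 - ρ) * (t - ρ * (t - u) - s) ≠ 0) :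
    ENNReal.ofReal (|(u - s) * (t - s) * ρ * (t - u) * (1 - ρ) * (t - ρ * (t - u) - s)| ^
        (finrank ℝ V / 4 : ℝ)) * volume G ≤
      (M * B ^ 3) ^ (1 / 4 : ℝ) * (volume (F s) + volume (F t) + volume (F u)) := by
  set J := |(u - s) * (t - s) * ρ * (t - u) * (1 - ρ) * (t - ρ * (t - u) - s)|
  have hJ : 0 < J := abs_pos.2 hne
  simp only [ne_eq, mul_eq_zero, not_or] at hne
  obtain ⟨⟨⟨⟨⟨hus, hts⟩, hρ⟩, htu⟩, hρ1⟩, hk⟩ := hne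
  set S := volume (F s) + volume (F t) + volume (F u) with hS
  have hs : volume (F s) ≤ S := by rw [hS, add_assoc]; exact le_self_add
  have ht : volume (F t) ≤ S := by rw [hS]; exact le_add_right le_add_self
  have hu : volume (F u) ≤ S := by rw [hS]; exact le_add_self
  have hpow : ENNReal.ofReal (J ^ finrank ℝ V) * volume G ^ 4 ≤ M * B ^ 3 * S ^ 4 := by
    refine (volume_pow_four_le hG hM hF hts hus htu hρ hρ1 hk hmeet).trans ?_
    grw [hs, ht, hu, hB, hB]
    exact le_of_eq (by ring)
  have hJpow : ENNReal.ofReal (J ^ finrank ℝ V) ^ (1 / 4 : ℝ) =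
      ENNReal.ofReal (J ^ (finrank ℝ V / 4 : ℝ)) := by
    rw [ENNReal.ofReal_rpow_of_pos (by positivity), ← Real.rpow_natCast, ← Real.rpow_mul hJ.le,
      mul_one_div]
  have hroot := ENNReal.rpow_le_rpow hpow (show (0 : ℝ) ≤ 1 / 4 by norm_num)
  rwa [ENNReal.mul_rpow_of_nonneg _ _ (by norm_num), ENNReal.mul_rpow_of_nonneg _ _ (by norm_num),
    rpow_pow_four_inv, rpow_pow_four_inv, hJpow] at hroot

theorem rpow_mul_rpow_mul_rpow_le {α η x y z J : ℝ} (hα : 0 ≤ α) (hx : 0 < x) (hy : 0 < y)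
    (hz : 0 < z) (hJ : 0 ≤ J) (h : x * y * z ^ 3 ≤ 8 * J) :
    x ^ (α - 1 + η) * y ^ (α - 1 + η) * z ^ (3 * (α - 1 + η) + 2) ≤
      8 ^ α * J ^ α * (x ^ (-1 + η) * y ^ (-1 + η) * z ^ (-1 + 3 * η)) := by
  calc x ^ (α - 1 + η) * y ^ (α - 1 + η) * z ^ (3 * (α - 1 + η) + 2)
      = (x * y * z ^ 3) ^ α * (x ^ (-1 + η) * y ^ (-1 + η) * z ^ (-1 + 3 * η)) := by
        rw [Real.mul_rpow (by positivity) (by positivity), Real.mul_rpow hx.le hy.le,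
          ← Real.rpow_natCast, ← Real.rpow_mul hz.le,
          show α - 1 + η = α + (-1 + η) by ring, Real.rpow_add hx, Real.rpow_add hy,
          show 3 * (α + (-1 + η)) + 2 = (3 : ℕ) * α + (-1 + 3 * η) by push_cast; ring,
          Real.rpow_add hz]
        ring
    _ ≤ (8 * J) ^ α * (x ^ (-1 + η) * y ^ (-1 + η) * z ^ (-1 + 3 * η)) := by gcongr
    _ = _ := by rw [Real.mul_rpow (by norm_num) hJ]

theorem volume_mul_ofReal_weight_le {F : ℝ → Set V} {η : ℝ} (hG : MeasurableSet G)
    (hM : ∀ ξ, volume (Prod.mk ξ ⁻¹' G) ≤ M) (hF : ∀ a, MeasurableSet (F a))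
    (hB : ∀ a, volume (F a) ≤ B)
    (hmeet : ∀ a ∈ ({s, t, u, t - ρ * (t - s), t - ρ * (t - u)} : Set ℝ),
      MapsTo (linePoint · a) G (F a))
    (hρ : |ρ| ≤ 1 / 2) (hus : |u - s| ≤ |t - s| / 8) (hρ0 : 0 < |ρ|) (hus0 : 0 < |u - s|) :
    volume G * ENNReal.ofReal (|u - s| ^ (finrank ℝ V / 4 - 1 + η) *
        |ρ| ^ (finrank ℝ V / 4 - 1 + η) * |t - s| ^ (3 * (finrank ℝ V / 4 - 1 + η) + 2)) ≤
      ENNReal.ofReal (8 ^ (finrank ℝ V / 4 : ℝ)) * (M * B ^ 3) ^ (1 / 4 : ℝ) *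
        ((volume (F s) + volume (F t) + volume (F u)) *
          ENNReal.ofReal (|u - s| ^ (-1 + η) * |ρ| ^ (-1 + η) * |t - s| ^ (-1 + 3 * η))) := by
  have hts0 : 0 < |t - s| := by linarith
  have hJ := abs_mul_abs_mul_abs_pow_three_le hρ hus
  have hJ0 : 0 < |(u - s) * (t - s) * ρ * (t - u) * (1 - ρ) * (t - ρ * (t - u) - s)| := by
    have : 0 < |u - s| * |ρ| * |t - s| ^ 3 := by positivity
    linarith
  have hmain := ofReal_rpow_mul_volume_le hG hM hF hB hmeet (abs_pos.1 hJ0)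
  set J := |(u - s) * (t - s) * ρ * (t - u) * (1 - ρ) * (t - ρ * (t - u) - s)|
  set w := |u - s| ^ (-1 + η) * |ρ| ^ (-1 + η) * |t - s| ^ (-1 + 3 * η)
  calc _ ≤ volume G * ENNReal.ofReal
          (8 ^ (finrank ℝ V / 4 : ℝ) * J ^ (finrank ℝ V / 4 : ℝ) * w) :=
        mul_le_mul_right (ENNReal.ofReal_le_ofReal (rpow_mul_rpow_mul_rpow_le
          (by positivity) hus0 hρ0 hts0 hJ0.le hJ)) _
    _ = ENNReal.ofReal (8 ^ (finrank ℝ V / 4 : ℝ)) *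
        (ENNReal.ofReal (J ^ (finrank ℝ V / 4 : ℝ)) * volume G) * ENNReal.ofReal w := by
        rw [ENNReal.ofReal_mul (by positivity), ENNReal.ofReal_mul (by positivity)]
        ring
    _ ≤ ENNReal.ofReal (8 ^ (finrank ℝ V / 4 : ℝ)) *
        ((M * B ^ 3) ^ (1 / 4 : ℝ) * (volume (F s) + volume (F t) + volume (F u))) *
        ENNReal.ofReal w := mul_le_mul_left (mul_le_mul_right hmain _) _
    _ = _ := by ring

theorem volume_mul_weight_le {F : ℝ → Set V} {β η : ℝ} (hβ : 0 < β)
    (hβη : β = finrank ℝ V / 4 - 1 + η) (hG : MeasurableSet G)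
    (hM : ∀ ξ, volume (Prod.mk ξ ⁻¹' G) ≤ M) (hF : ∀ a, MeasurableSet (F a))
    (hB : ∀ a, volume (F a) ≤ B) (hF1 : ∀ a, (F a).Nonempty → a ∈ Ioc (0 : ℝ) 1)
    (hmeet : ∀ a ∈ ({s, t, u, t - ρ * (t - s), t - ρ * (t - u)} : Set ℝ),
      MapsTo (linePoint · a) G (F a)) :
    volume G * (leInd |ρ| (1 / 2) * leInd |u - s| (|t - s| / 8) *
        ENNReal.ofReal (|u - s| ^ β * |ρ| ^ β * |t - s| ^ (3 * β + 2))) ≤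
      ENNReal.ofReal (8 ^ (finrank ℝ V / 4 : ℝ)) * (M * B ^ 3) ^ (1 / 4 : ℝ) *
        ((volume (F s) + volume (F t) + volume (F u)) *
          (singularKernel η (u - s) * singularKernel (3 * η) (t - s) * singularKernel η ρ)) := by
  rcases lt_or_ge (1 / 2) |ρ| with hρ | hρ
  · rw [leInd_of_lt hρ]
    simp
  rcases lt_or_ge (|t - s| / 8) |u - s| with hus | hus
  · rw [leInd_of_lt hus]
    simp
  rcases eq_or_ne ρ 0 with rfl | hρ0
  · simp [Real.zero_rpow hβ.ne']
  rcases eq_or_ne (u - s) 0 with hus0 | hus0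
  · simp [hus0, Real.zero_rpow hβ.ne']
  rcases G.eq_empty_or_nonempty with rfl | ⟨g, hg⟩
  · simp
  obtain ⟨hs0, hs1⟩ := hF1 s ⟨_, hmeet s (by simp) hg⟩
  obtain ⟨ht0, ht1⟩ := hF1 t ⟨_, hmeet t (by simp) hg⟩
  have hts : |t - s| ≤ 1 := abs_sub_le_iff.2 ⟨by linarith, by linarith⟩
  rw [leInd_of_le hρ, leInd_of_le hus, one_mul, one_mul, singularKernel_of_le (by linarith),
    singularKernel_of_le hts, singularKernel_of_le (by linarith),
    ← ENNReal.ofReal_mul (by positivity), ← ENNReal.ofReal_mul (by positivity), hβη,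
    mul_right_comm (|u - s| ^ (-1 + η))]
  exact volume_mul_ofReal_weight_le hG hM hF hB hmeet hρ hus (abs_pos.2 hρ0) (abs_pos.2 hus0)

end Incidence

theorem lintegral_fiveTimesForm {γ : Type*} [MeasurableSpace γ] (μ : Measure γ) [SFinite μ] (β : ℝ)
    {e : γ → ℝ → ℝ≥0∞} (he : Measurable fun z : γ × ℝ ↦ e z.1 z.2) :
    ∫⁻ g, fiveTimesForm β (e g) ∂μ =
      ∫⁻ t, ∫⁻ ρ, ∫⁻ s, ∫⁻ u, (∫⁻ g, e g t * e g s * e g u * e g (t - ρ * (t - s)) *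
        e g (t - ρ * (t - u)) ∂μ) * (leInd |ρ| (1 / 2) * leInd |u - s| (|t - s| / 8) *
          ENNReal.ofReal (|u - s| ^ β * |ρ| ^ β * |t - s| ^ (3 * β + 2))) := by
  unfold fiveTimesForm
  rw [lintegral_lintegral_swap (by fun_prop)]
  refine lintegral_congr fun t ↦ ?_
  rw [lintegral_lintegral_swap (by fun_prop)]
  refine lintegral_congr fun ρ ↦ ?_
  rw [lintegral_lintegral_swap (by fun_prop)]
  refine lintegral_congr fun s ↦ ?_
  rw [lintegral_lintegral_swap (by fun_prop)]
  exact lintegral_congr fun u ↦ lintegral_mul_const _ (by fun_prop)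

section Incidence

variable {V : Type*} [NormedAddCommGroup V] [NormedSpace ℝ V]

/-- The times at which the moving point `linePoint g` belongs to the space-time set `E`. -/
def hitTimes (E : Set (V × ℝ)) (g : V × V) : Set ℝ := {t | linePoint g t ∈ timeSlice E t}

theorem volume_hitTimes_le_one {E : Set (V × ℝ)} (hE1 : ∀ z ∈ E, z.2 ∈ Ioc (0 : ℝ) 1) (g : V × V) :
    volume (hitTimes E g) ≤ 1 :=
  (measure_mono fun t (ht : (linePoint g t, t) ∈ E) ↦ hE1 _ ht).trans (by simp)

variable [MeasureSpace V] [BorelSpace V]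

theorem measurableSet_hitTimes {E : Set (V × ℝ)} (hE : MeasurableSet E) (g : V × V) :
    MeasurableSet (hitTimes E g) := by
  have hpoint : Measurable fun t : ℝ ↦ (linePoint g t, t) := by
    unfold linePoint
    fun_prop
  exact hpoint hE

variable [FiniteDimensional ℝ V]

theorem measurable_indicator_hitTimes {E : Set (V × ℝ)} (hE : MeasurableSet E) :
    Measurable fun z : (V × V) × ℝ ↦ (hitTimes E z.1).indicator (1 : ℝ → ℝ≥0∞) z.2 := by
  have hpoint : Measurable fun z : (V × V) × ℝ ↦ (linePoint z.1 z.2, z.2) := by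
    unfold linePoint
    fun_prop
  exact (measurable_one.indicator hE).comp hpoint

variable [(volume : Measure V).IsAddHaarMeasure] {E : Set (V × ℝ)} {G : Set (V × V)} {M B : ℝ≥0∞}

theorem setLIntegral_five_mul_weight_le {β η : ℝ} (hβ : 0 < β)
    (hβη : β = finrank ℝ V / 4 - 1 + η) (hE : MeasurableSet E) (hG : MeasurableSet G)
    (hM : ∀ ξ, volume (Prod.mk ξ ⁻¹' G) ≤ M) (hB : ∀ a, volume (timeSlice E a) ≤ B)
    (hE1 : ∀ z ∈ E, z.2 ∈ Ioc (0 : ℝ) 1) (t ρ s u : ℝ) :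
    (∫⁻ g in G, (hitTimes E g).indicator 1 t * (hitTimes E g).indicator 1 s *
        (hitTimes E g).indicator 1 u * (hitTimes E g).indicator 1 (t - ρ * (t - s)) *
        (hitTimes E g).indicator 1 (t - ρ * (t - u))) *
      (leInd |ρ| (1 / 2) * leInd |u - s| (|t - s| / 8) *
        ENNReal.ofReal (|u - s| ^ β * |ρ| ^ β * |t - s| ^ (3 * β + 2))) ≤
      ENNReal.ofReal (8 ^ (finrank ℝ V / 4 : ℝ)) * (M * B ^ 3) ^ (1 / 4 : ℝ) *
        ((volume (timeSlice E s) + volume (timeSlice E t) + volume (timeSlice E u)) *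
          (singularKernel η (u - s) * singularKernel (3 * η) (t - s) * singularKernel η ρ)) := by
  set A : Set ℝ := {s, t, u, t - ρ * (t - s), t - ρ * (t - u)}
  set S : Set (V × V) := {g | ∀ a ∈ A, linePoint g a ∈ timeSlice E a}
  have hS : MeasurableSet S := by
    have : S = ⋂ a ∈ A, (linePoint · a) ⁻¹' timeSlice E a := by ext; simp [S]
    rw [this]
    exact (toFinite A).measurableSet_biInter fun a _ ↦
      measurable_linePoint a (measurableSet_timeSlice hE a)
  have hprod : ∀ g, (hitTimes E g).indicator 1 t * (hitTimes E g).indicator 1 s *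
      (hitTimes E g).indicator 1 u * (hitTimes E g).indicator 1 (t - ρ * (t - s)) *
      (hitTimes E g).indicator 1 (t - ρ * (t - u)) = S.indicator (1 : V × V → ℝ≥0∞) g := fun g ↦ by
    classical
    simp only [indicator_apply, Pi.one_apply, mul_ite, mul_one, mul_zero, ← ite_and]
    refine if_congr ?_ rfl rfl
    simp only [S, A, hitTimes, mem_ofPred_eq, mem_insert_iff, mem_singleton_iff,
      forall_eq_or_imp, forall_eq]
    tauto
  simp only [hprod]
  rw [lintegral_indicator_one hS, Measure.restrict_apply hS]
  refine volume_mul_weight_le hβ hβη (hS.inter hG)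
    (fun ξ ↦ (measure_mono (preimage_mono inter_subset_right)).trans (hM ξ))
    (measurableSet_timeSlice hE) hB (fun a ⟨x, hx⟩ ↦ hE1 _ hx) fun a ha g hg ↦ hg.1 a ha

theorem setLIntegral_fiveTimesForm_le {β η : ℝ} (hβ : 0 < β)
    (hβη : β = finrank ℝ V / 4 - 1 + η) (hE : MeasurableSet E) (hG : MeasurableSet G)
    (hM : ∀ ξ, volume (Prod.mk ξ ⁻¹' G) ≤ M) (hB : ∀ a, volume (timeSlice E a) ≤ B)
    (hE1 : ∀ z ∈ E, z.2 ∈ Ioc (0 : ℝ) 1) :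
    ∫⁻ g in G, fiveTimesForm β ((hitTimes E g).indicator 1) ≤
      ENNReal.ofReal (8 ^ (finrank ℝ V / 4 : ℝ)) * (M * B ^ 3) ^ (1 / 4 : ℝ) *
        (3 * (∫⁻ x, singularKernel η x) * (∫⁻ x, singularKernel (3 * η) x) * volume E *
          ∫⁻ x, singularKernel η x) := by
  have hΦ := measurable_volume_timeSlice hE
  set Φ : ℝ → ℝ≥0∞ := fun t ↦ volume (timeSlice E t)
  set D := ENNReal.ofReal (8 ^ (finrank ℝ V / 4 : ℝ)) * (M * B ^ 3) ^ (1 / 4 : ℝ)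
  calc ∫⁻ g in G, fiveTimesForm β ((hitTimes E g).indicator 1)
      ≤ ∫⁻ t, ∫⁻ ρ, ∫⁻ s, ∫⁻ u, D * ((Φ s + Φ t + Φ u) *
          (singularKernel η (u - s) * singularKernel (3 * η) (t - s) * singularKernel η ρ)) := by
        rw [lintegral_fiveTimesForm _ _ (measurable_indicator_hitTimes hE)]
        exact lintegral_mono fun t ↦ lintegral_mono fun ρ ↦ lintegral_mono fun s ↦
          lintegral_mono fun u ↦ setLIntegral_five_mul_weight_le hβ hβη hE hG hM hB hE1 t ρ s u
    _ = D * ∫⁻ t, ∫⁻ ρ, (∫⁻ s, ∫⁻ u, (Φ s + Φ t + Φ u) *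
          (singularKernel η (u - s) * singularKernel (3 * η) (t - s))) * singularKernel η ρ := by
        rw [← lintegral_const_mul _ (by fun_prop)]
        refine lintegral_congr fun t ↦ ?_
        rw [← lintegral_const_mul _ (by fun_prop)]
        refine lintegral_congr fun ρ ↦ ?_
        rw [← lintegral_mul_const _ (by fun_prop), ← lintegral_const_mul _ (by fun_prop)]
        refine lintegral_congr fun s ↦ ?_
        rw [← lintegral_mul_const _ (by fun_prop), ← lintegral_const_mul _ (by fun_prop)]
        exact lintegral_congr fun u ↦ by ring
    _ = _ := by
        rw [lintegral_congr fun t ↦ lintegral_const_mul _ (by fun_prop),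
          lintegral_mul_const _ (by fun_prop), lintegral₃_mul_kernel hΦ (by fun_prop) (by fun_prop),
          lintegral_volume_timeSlice hE]

theorem exists_volume_mul_rpow_le (hV : 4 ≤ finrank ℝ V) {η : ℝ} (hη : 0 < η) :
    ∃ K : ℝ≥0∞, K ≠ ∞ ∧ ∀ {E : Set (V × ℝ)} {G : Set (V × V)} {M B y : ℝ≥0∞},
      MeasurableSet E → MeasurableSet G → (∀ ξ, volume (Prod.mk ξ ⁻¹' G) ≤ M) →
      (∀ a, volume (timeSlice E a) ≤ B) → (∀ z ∈ E, z.2 ∈ Ioc (0 : ℝ) 1) → y ≠ 0 →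
      (∀ g ∈ G, y ≤ volume (hitTimes E g)) →
      volume G * y ^ (finrank ℝ V + 1 + 4 * η) ≤ K * (M * B ^ 3) ^ (1 / 4 : ℝ) * volume E := by
  set β : ℝ := finrank ℝ V / 4 - 1 + η with hβ
  have hβ0 : 0 < β := by
    have : (4 : ℝ) ≤ finrank ℝ V := by exact_mod_cast hV
    linarith
  obtain ⟨K, -, hK⟩ := exists_ofReal_rpow_le_fiveTimesForm hβ0
  have hk := lintegral_singularKernel_ne_top hη
  have hk₃ := lintegral_singularKernel_ne_top (a := 3 * η) (by positivity)
  refine ⟨ENNReal.ofReal K * (ENNReal.ofReal (8 ^ (finrank ℝ V / 4 : ℝ)) *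
    (3 * (∫⁻ x, singularKernel η x) * (∫⁻ x, singularKernel (3 * η) x) *
      ∫⁻ x, singularKernel η x)), by finiteness, fun {E G M B y} hE hG hM hB hE1 hy hyG ↦ ?_⟩
  have hline : ∀ g ∈ G, y ^ (finrank ℝ V + 1 + 4 * η) ≤
      ENNReal.ofReal K * fiveTimesForm β ((hitTimes E g).indicator 1) := by
    intro g hg
    have hfin : volume (hitTimes E g) ≠ ∞ :=
      ne_top_of_le_ne_top one_ne_top (volume_hitTimes_le_one hE1 g)
    have hpos : 0 < (volume (hitTimes E g)).toReal :=
      ENNReal.toReal_pos (hy.bot_lt.trans_le (hyG g hg)).ne' hfin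
    calc y ^ (finrank ℝ V + 1 + 4 * η)
        ≤ volume (hitTimes E g) ^ (5 + 4 * β) := by
          rw [show finrank ℝ V + 1 + 4 * η = 5 + 4 * β by rw [hβ]; ring]
          exact ENNReal.rpow_le_rpow (hyG g hg) (by positivity)
      _ = ENNReal.ofReal ((volume (hitTimes E g)).toReal ^ (5 + 4 * β)) := by
          rw [← ENNReal.ofReal_rpow_of_pos hpos, ENNReal.ofReal_toReal hfin]
      _ ≤ _ := hK (measurable_one.indicator (measurableSet_hitTimes hE g))
          (indicator_le_self' (by simp)) hpos
          (by rw [lintegral_indicator_one (measurableSet_hitTimes hE g),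
            ENNReal.ofReal_toReal hfin])
  calc volume G * y ^ (finrank ℝ V + 1 + 4 * η)
      = ∫⁻ _ in G, y ^ (finrank ℝ V + 1 + 4 * η) := by rw [setLIntegral_const, mul_comm]
    _ ≤ ∫⁻ g in G, ENNReal.ofReal K * fiveTimesForm β ((hitTimes E g).indicator 1) :=
        setLIntegral_mono' hG hline
    _ = ENNReal.ofReal K * ∫⁻ g in G, fiveTimesForm β ((hitTimes E g).indicator 1) :=
        lintegral_const_mul' _ _ ENNReal.ofReal_ne_top
    _ ≤ _ := by
        grw [setLIntegral_fiveTimesForm_le hβ0 hβ hE hG hM hB hE1]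
        exact le_of_eq (by ring)

theorem pow_four_mul_two_mul_rpow_le {x y v K M : ℝ≥0∞} {n η : ℝ}
    (hexp : 0 ≤ 4 * n + 7 + 16 * η) (hy0 : y ≠ 0) (hy' : y ≠ ∞)
    (h : x * y ^ (n + 1 + 4 * η) ≤ K * (M * (v / y) ^ 3) ^ (1 / 4 : ℝ) * v) :
    x ^ 4 * (2 * y) ^ (4 * n + 7 + 16 * η) ≤ 2 ^ (4 * n + 7 + 16 * η) * K ^ 4 * M * v ^ 7 :=
  calc x ^ 4 * (2 * y) ^ (4 * n + 7 + 16 * η)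
      = 2 ^ (4 * n + 7 + 16 * η) * ((x * y ^ (n + 1 + 4 * η)) ^ 4 * y ^ 3) := by
        rw [ENNReal.mul_rpow_of_nonneg _ _ hexp,
          show 4 * n + 7 + 16 * η = (n + 1 + 4 * η) * (4 : ℕ) + (3 : ℕ) by push_cast; ring,
          ENNReal.rpow_add _ _ hy0 hy', ENNReal.rpow_mul y, ENNReal.rpow_natCast,
          ENNReal.rpow_natCast]
        ring
    _ ≤ 2 ^ (4 * n + 7 + 16 * η) * ((K * (M * (v / y) ^ 3) ^ (1 / 4 : ℝ) * v) ^ 4 * y ^ 3) := by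
        grw [h]
    _ = 2 ^ (4 * n + 7 + 16 * η) * K ^ 4 * M * (v / y * y) ^ 3 * v ^ 4 := by
        rw [mul_pow, mul_pow, ← ENNReal.rpow_mul_natCast,
          show (1 / 4 : ℝ) * (4 : ℕ) = 1 by norm_num, ENNReal.rpow_one]
        ring
    _ = 2 ^ (4 * n + 7 + 16 * η) * K ^ 4 * M * v ^ 7 := by
        rw [ENNReal.div_mul_cancel hy0 hy']
        ring

/-- The slices of measure at least `v / y`, with `y = l / 2`, occupy a set of times of measure at
most `l / 2`, so removing them costs each line at most half of its hitting time. -/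
theorem exists_volume_pow_four_mul_rpow_le (hV : 4 ≤ finrank ℝ V) {η : ℝ} (hη : 0 < η) :
    ∃ K : ℝ≥0∞, K ≠ ∞ ∧ ∀ {E : Set (V × ℝ)} {G : Set (V × V)} {M v l : ℝ≥0∞},
      MeasurableSet E → MeasurableSet G → (∀ ξ, volume (Prod.mk ξ ⁻¹' G) ≤ M) →
      volume E ≤ v → v ≠ 0 → v ≠ ∞ → l ≠ 0 → l ≠ ∞ →
      (∀ g ∈ G, l ≤ volume (hitTimes E g ∩ Ioc 0 1)) →
      volume G ^ 4 * l ^ (4 * finrank ℝ V + 7 + 16 * η) ≤ K * M * v ^ 7 := by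
  obtain ⟨K, hK, hcore⟩ := exists_volume_mul_rpow_le hV hη
  set n : ℝ := (finrank ℝ V : ℝ)
  refine ⟨2 ^ (4 * n + 7 + 16 * η) * K ^ 4, by finiteness,
    fun {E G M v l} hE hG hM hv hv0 hv' hl0 hl' hlG ↦ ?_⟩
  obtain ⟨y, rfl⟩ : ∃ y, l = 2 * y :=
    ⟨l / 2, (ENNReal.mul_div_cancel two_ne_zero ofNat_ne_top).symm⟩
  have hy0 : y ≠ 0 := right_ne_zero_of_mul hl0
  have hy' : y ≠ ∞ := fun h ↦ hl' (by simp [h])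
  set heavy : Set ℝ := {t | v / y ≤ volume (timeSlice E t)}
  have hheavy : MeasurableSet heavy :=
    measurableSet_le measurable_const (measurable_volume_timeSlice hE)
  have hheavy_le : volume heavy ≤ y :=
    volume_setOf_div_le_volume_timeSlice_le hE hv hv0 hv' hy0 hy'
  set E' : Set (V × ℝ) := E ∩ Prod.snd ⁻¹' (Ioc 0 1 \ heavy)
  have hE' : MeasurableSet E' := hE.inter (measurable_snd (measurableSet_Ioc.diff hheavy))
  have hslice : ∀ a, volume (timeSlice E' a) ≤ v / y := fun a ↦ by
    by_cases ha : a ∈ heavy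
    · simp [E', timeSlice, preimage_inter, preimage_preimage, ha]
    · exact (measure_mono (preimage_mono inter_subset_left)).trans (not_le.1 ha).le
  have hhit : ∀ g ∈ G, y ≤ volume (hitTimes E' g) := by
    intro g hg
    have hsub : hitTimes E g ∩ Ioc 0 1 ⊆ hitTimes E' g ∪ heavy := fun t ht ↦
      or_iff_not_imp_right.2 fun h ↦ ⟨ht.1, ht.2, h⟩
    have : y + y ≤ volume (hitTimes E' g) + y := by
      rw [← two_mul]
      grw [hlG g hg, hsub, measure_union_le, hheavy_le]
    exact (ENNReal.add_le_add_iff_right hy').1 this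
  have hmain : volume G * y ^ (n + 1 + 4 * η) ≤ K * (M * (v / y) ^ 3) ^ (1 / 4 : ℝ) * v :=
    (hcore hE' hG hM hslice (fun z hz ↦ hz.2.1) hy0 hhit).trans
      (mul_le_mul_right ((measure_mono inter_subset_left).trans hv) _)
  exact pow_four_mul_two_mul_rpow_le (by positivity) hy0 hy' hmain

end Incidence

/-! ### Dyadic sums -/

theorem rpow_tsum_le_tsum_rpow {ι : Type*} (f : ι → ℝ≥0∞) {a : ℝ} (ha : 0 < a) (ha1 : a ≤ 1) :
    (∑' i, f i) ^ a ≤ ∑' i, f i ^ a := by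
  have hlim : Filter.Tendsto (fun s : Finset ι ↦ (∑ i ∈ s, f i) ^ a) Filter.atTop
      (nhds ((∑' i, f i) ^ a)) :=
    (ENNReal.continuous_rpow_const.tendsto _).comp ENNReal.summable.hasSum
  have hadd : ∀ x y : ℝ≥0∞, (x + y) ^ a ≤ x ^ a + y ^ a := fun x y ↦
    ENNReal.rpow_add_le_add_rpow x y ha.le ha1
  exact le_of_tendsto' hlim fun s ↦ (Finset.le_sum_of_subadditive (· ^ a)
    (ENNReal.zero_rpow_of_pos ha).le hadd s f).trans (ENNReal.sum_le_tsum s)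

theorem rpow_tsum_le_mul_tsum {ι : Type*} {w : ι → ℝ≥0∞} (hw : ∀ i, w i ≠ 0)
    (hw' : ∀ i, w i ≠ ∞) (f : ι → ℝ≥0∞) {r : ℝ} (hr : 0 < r) :
    (∑' i, f i) ^ r ≤ (∑' i, (w i)⁻¹) ^ r * ∑' i, (w i * f i) ^ r := by
  set S := ∑' i, (w i * f i) ^ r
  have hf : ∀ i, f i ≤ (w i)⁻¹ * S ^ r⁻¹ := fun i ↦ by
    rw [mul_comm, ← div_eq_mul_inv, ENNReal.le_div_iff_mul_le (.inl (hw i)) (.inl (hw' i)),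
      mul_comm, ENNReal.le_rpow_inv_iff hr]
    exact ENNReal.le_tsum i
  calc (∑' i, f i) ^ r ≤ (∑' i, (w i)⁻¹ * S ^ r⁻¹) ^ r :=
        ENNReal.rpow_le_rpow (ENNReal.tsum_le_tsum hf) hr.le
    _ = (∑' i, (w i)⁻¹) ^ r * S := by
        rw [ENNReal.tsum_mul_right, ENNReal.mul_rpow_of_nonneg _ _ hr.le,
          ENNReal.rpow_inv_rpow hr.ne']

theorem inv_two_rpow_lt_one {σ : ℝ} (hσ : 0 < σ) : (2⁻¹ : ℝ≥0∞) ^ σ < 1 :=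
  ENNReal.rpow_lt_one ENNReal.one_half_lt_one hσ

theorem inv_one_sub_inv_two_rpow_ne_top {σ : ℝ} (hσ : 0 < σ) :
    (1 - (2⁻¹ : ℝ≥0∞) ^ σ)⁻¹ ≠ ∞ :=
  ENNReal.inv_ne_top.2 (tsub_pos_of_lt (inv_two_rpow_lt_one hσ)).ne'

theorem tsum_mul_inv_two_pow_rpow (X : ℝ≥0∞) {σ : ℝ} (hσ : 0 ≤ σ) :
    ∑' k : ℕ, (X * 2⁻¹ ^ k) ^ σ = X ^ σ * (1 - 2⁻¹ ^ σ)⁻¹ := by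
  rw [← ENNReal.tsum_geometric, ← ENNReal.tsum_mul_left]
  refine tsum_congr fun k ↦ ?_
  rw [ENNReal.mul_rpow_of_nonneg _ _ hσ, ← ENNReal.rpow_natCast, ← ENNReal.rpow_natCast,
    ← ENNReal.rpow_mul, ← ENNReal.rpow_mul, mul_comm (k : ℝ)]

theorem tsum_two_rpow_neg_mul_abs_ne_top {σ : ℝ} (hσ : 0 < σ) :
    ∑' k : ℤ, (2 : ℝ≥0∞) ^ (-(σ * |(k : ℝ)|)) ≠ ∞ := by
  have hpow : ∀ k : ℤ, (2 : ℝ≥0∞) ^ (-(σ * |(k : ℝ)|)) = (2⁻¹ ^ σ) ^ k.natAbs := fun k ↦ by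
    rw [← ENNReal.rpow_natCast, ← ENNReal.rpow_mul, ENNReal.inv_rpow, ← ENNReal.rpow_neg,
      Nat.cast_natAbs, Int.cast_abs]
  simp only [hpow]
  rw [tsum_of_nat_of_neg_add_one ENNReal.summable ENNReal.summable]
  have hneg : ∀ n : ℕ, (-((n : ℤ) + 1)).natAbs = n + 1 := fun n ↦ by omega
  simp only [Int.natAbs_natCast, hneg, pow_succ]
  rw [ENNReal.tsum_mul_right, ENNReal.tsum_geometric]
  have := inv_one_sub_inv_two_rpow_ne_top hσ
  have := (inv_two_rpow_lt_one hσ).ne_top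
  finiteness

theorem exists_mem_Ioc_mul_inv_two_pow {X x : ℝ≥0∞} (hX : X ≠ ∞) (hx0 : x ≠ 0) (hx : x ≤ X) :
    ∃ k : ℕ, x ∈ Ioc (X * 2⁻¹ ^ (k + 1)) (X * 2⁻¹ ^ k) := by
  classical
  have hlim : Filter.Tendsto (fun k : ℕ ↦ X * 2⁻¹ ^ k) Filter.atTop (nhds 0) := by
    simpa using ENNReal.Tendsto.const_mul
      (ENNReal.tendsto_pow_atTop_nhds_zero_of_lt_one ENNReal.one_half_lt_one) (.inr hX)
  have hex : ∃ k : ℕ, X * 2⁻¹ ^ (k + 1) < x :=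
    ((hlim.comp (Filter.tendsto_add_atTop_nat 1)).eventually_lt_const
      (pos_iff_ne_zero.2 hx0)).exists
  refine ⟨Nat.find hex, Nat.find_spec hex, ?_⟩
  rcases h : Nat.find hex with _ | k
  · simpa using hx
  · exact not_lt.1 (Nat.find_min hex (h ▸ k.lt_succ_self))

section DyadicLevels

variable {α : Type*} [MeasurableSpace α] {μ : Measure α} {g : α → ℝ≥0∞} {X : ℝ≥0∞} {a : ℝ}

theorem lintegral_rpow_le_tsum_measure_preimage_Ioc (hg : Measurable g) (hX : X ≠ ∞)
    (hgX : ∀ x, g x ≤ X) (ha : 0 < a) :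
    ∫⁻ x, g x ^ a ∂μ ≤
      ∑' k : ℕ, (X * 2⁻¹ ^ k) ^ a * μ (g ⁻¹' Ioc (X * 2⁻¹ ^ (k + 1)) (X * 2⁻¹ ^ k)) := by
  set S : ℕ → Set α := fun k ↦ g ⁻¹' Ioc (X * 2⁻¹ ^ (k + 1)) (X * 2⁻¹ ^ k)
  have hS : ∀ k, MeasurableSet (S k) := fun k ↦ hg measurableSet_Ioc
  have hpoint : ∀ x, g x ^ a ≤ ∑' k, (S k).indicator (fun _ ↦ (X * 2⁻¹ ^ k) ^ a) x := fun x ↦ by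
    by_cases h0 : g x = 0
    · simp [h0, ENNReal.zero_rpow_of_pos ha]
    obtain ⟨k, hk⟩ := exists_mem_Ioc_mul_inv_two_pow hX h0 (hgX x)
    refine le_trans ?_ (ENNReal.le_tsum k)
    rw [indicator_of_mem (show x ∈ S k from hk)]
    exact ENNReal.rpow_le_rpow hk.2 ha.le
  calc ∫⁻ x, g x ^ a ∂μ ≤ ∫⁻ x, ∑' k, (S k).indicator (fun _ ↦ (X * 2⁻¹ ^ k) ^ a) x ∂μ :=
        lintegral_mono hpoint
    _ = ∑' k, (X * 2⁻¹ ^ k) ^ a * μ (S k) := by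
        rw [lintegral_tsum fun k ↦ (measurable_const.indicator (hS k)).aemeasurable]
        exact tsum_congr fun k ↦ lintegral_indicator_const (hS k) _

theorem lintegral_rpow_le_of_measure_preimage_Ioc_le (hg : Measurable g) (hX0 : X ≠ 0)
    (hX : X ≠ ∞) (hgX : ∀ x, g x ≤ X) {s : ℝ} (ha : 0 < a) (hs : s < a) {K : ℝ≥0∞}
    (hK : ∀ τ, τ ≠ 0 → τ ≠ ∞ → μ (g ⁻¹' Ioc (τ / 2) τ) ≤ K * τ ^ (-s)) :
    ∫⁻ x, g x ^ a ∂μ ≤ K * (X ^ (a - s) * (1 - 2⁻¹ ^ (a - s))⁻¹) := by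
  refine (lintegral_rpow_le_tsum_measure_preimage_Ioc hg hX hgX ha).trans ?_
  rw [← tsum_mul_inv_two_pow_rpow X (sub_pos.2 hs).le, ← ENNReal.tsum_mul_left]
  refine ENNReal.tsum_le_tsum fun k ↦ ?_
  have hτ0 : X * 2⁻¹ ^ k ≠ 0 := by simp [hX0]
  have hτ : X * 2⁻¹ ^ k ≠ ∞ := by finiteness
  calc (X * 2⁻¹ ^ k) ^ a * μ (g ⁻¹' Ioc (X * 2⁻¹ ^ (k + 1)) (X * 2⁻¹ ^ k))
      ≤ (X * 2⁻¹ ^ k) ^ a * (K * (X * 2⁻¹ ^ k) ^ (-s)) := by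
        rw [pow_succ, ← mul_assoc, ← div_eq_mul_inv]
        grw [hK _ hτ0 hτ]
    _ = K * (X * 2⁻¹ ^ k) ^ (a - s) := by
        rw [sub_eq_add_neg, ENNReal.rpow_add _ _ hτ0 hτ]
        ring

end DyadicLevels

theorem le_tsum_two_rpow_mul_indicator {α : Type*} (f : α → ℝ≥0∞) (x : α) :
    f x ≤ ∑' k : ℤ, 2 ^ ((k : ℝ) + 1) * {y | 2 ^ (k : ℝ) ≤ f y}.indicator 1 x := by
  refine le_of_forall_lt_imp_le_of_dense fun c hc ↦ ?_
  by_cases hc0 : c = 0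
  · simp [hc0]
  obtain ⟨k, hk, hk'⟩ := ENNReal.exists_mem_Ico_zpow hc0 hc.ne_top one_lt_two ofNat_ne_top
  rw [← ENNReal.rpow_intCast] at hk hk'
  refine le_trans ?_ (ENNReal.le_tsum k)
  rw [indicator_of_mem (show x ∈ {y | 2 ^ (k : ℝ) ≤ f y} from hk.trans hc.le), Pi.one_apply,
    mul_one]
  exact_mod_cast hk'.le

/-! ### The x-ray transform of an indicator function -/

section XRay

variable {n : ℕ}

@[fun_prop]
theorem measurable_xrayT {f : Euc n × ℝ → ℝ≥0∞} (hf : Measurable f) :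
    Measurable fun z : Euc n × Euc n ↦ xrayT f z.1 z.2 := by
  unfold xrayT
  fun_prop

theorem xrayT_le_one {f : Euc n × ℝ → ℝ≥0∞} (hf : ∀ z, f z ≤ 1) (ξ x : Euc n) :
    xrayT f ξ x ≤ 1 :=
  calc xrayT f ξ x ≤ ∫⁻ _ in Ioc (0 : ℝ) 1, 1 := lintegral_mono fun _ ↦ hf _
    _ = 1 := by simp

theorem lintegral_xrayT_le {f : Euc n × ℝ → ℝ≥0∞} (hf : Measurable f) (ξ : Euc n) :
    ∫⁻ x, xrayT f ξ x ≤ ∫⁻ z, f z := by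
  unfold xrayT
  rw [lintegral_lintegral_swap (by fun_prop)]
  calc ∫⁻ t in Ioc (0 : ℝ) 1, ∫⁻ x, f (x + t • ξ, t)
      = ∫⁻ t in Ioc (0 : ℝ) 1, ∫⁻ x, f (x, t) :=
        lintegral_congr fun t ↦ lintegral_add_right_eq_self (fun x ↦ f (x, t)) (t • ξ)
    _ ≤ ∫⁻ t, ∫⁻ x, f (x, t) := setLIntegral_le_lintegral _ _
    _ = ∫⁻ z, f z := by rw [Measure.volume_eq_prod, lintegral_prod_symm' f hf]

theorem xrayT_const_mul {c : ℝ≥0∞} (hc : c ≠ ∞) (f : Euc n × ℝ → ℝ≥0∞) (ξ x : Euc n) :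
    xrayT (fun z ↦ c * f z) ξ x = c * xrayT f ξ x :=
  lintegral_const_mul' _ _ hc

theorem xrayT_indicator_one {E : Set (Euc n × ℝ)} (hE : MeasurableSet E) (ξ x : Euc n) :
    xrayT (E.indicator 1) ξ x = volume (hitTimes E (ξ, x) ∩ Ioc 0 1) := by
  rw [← Measure.restrict_apply (measurableSet_hitTimes hE _),
    ← lintegral_indicator_one (measurableSet_hitTimes hE _)]
  rfl

theorem xrayT_indicator_one_le_one (E : Set (Euc n × ℝ)) (ξ x : Euc n) :
    xrayT (E.indicator 1) ξ x ≤ 1 :=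
  xrayT_le_one (indicator_le_self' (by simp)) ξ x

/-- The lines, given by direction and starting point, that spend time at least `l` in `E`. -/
def richLines (E : Set (Euc n × ℝ)) (l : ℝ≥0∞) : Set (Euc n × Euc n) :=
  {g | l ≤ xrayT (E.indicator 1) g.1 g.2}

variable {E : Set (Euc n × ℝ)}

theorem measurableSet_richLines (hE : MeasurableSet E) (l : ℝ≥0∞) :
    MeasurableSet (richLines E l) :=
  measurableSet_le measurable_const (measurable_xrayT (measurable_one.indicator hE))

theorem measurable_volume_richLines (hE : MeasurableSet E) (l : ℝ≥0∞) :
    Measurable fun ξ ↦ volume (Prod.mk ξ ⁻¹' richLines E l) :=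
  measurable_measure_prodMk_left (measurableSet_richLines hE l)

theorem volume_richLines_le (hE : MeasurableSet E) {l : ℝ≥0∞} (hl0 : l ≠ 0) (hl : l ≠ ∞)
    (ξ : Euc n) : volume (Prod.mk ξ ⁻¹' richLines E l) ≤ volume E / l := by
  have hE' := measurable_xrayT (measurable_one.indicator hE)
  calc volume (Prod.mk ξ ⁻¹' richLines E l) ≤ (∫⁻ x, xrayT (E.indicator 1) ξ x) / l :=
        meas_ge_le_lintegral_div (hE'.comp measurable_prodMk_left).aemeasurable hl0 hl
    _ ≤ volume E / l := by
        grw [lintegral_xrayT_le (measurable_one.indicator hE), lintegral_indicator_one hE]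

theorem le_mul_rpow_of_pow_four_le {ω b τ v L K : ℝ≥0∞} {κ : ℝ} (hκ : 0 ≤ κ) (hκ1 : κ ≤ 1)
    (hb : ω ≤ b) (hτ0 : τ ≠ 0) (hτ : τ ≠ ∞) (hL0 : L ≠ 0) (hL : L ≠ ∞)
    (h : (ω * (τ / 2)) ^ 4 * L ≤ K * τ * v ^ 7) :
    ω ≤ b ^ (1 - κ) * (16 * K) ^ (κ / 4) * (v ^ 7 / L) ^ (κ / 4) * τ ^ (-(3 * κ / 4)) := by
  have hω : ω ^ 4 ≤ 16 * K * (v ^ 7 / L) * τ ^ (-3 : ℝ) :=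
    calc ω ^ 4 = (ω * (τ / 2)) ^ 4 * L * (16 * (τ⁻¹ ^ 4 * L⁻¹)) := by
          have h2 : (τ / 2) * τ⁻¹ * 2 = 1 := by
            rw [mul_right_comm, ENNReal.div_mul_cancel two_ne_zero ofNat_ne_top,
              ENNReal.mul_inv_cancel hτ0 hτ]
          calc ω ^ 4 = ω ^ 4 * ((τ / 2) * τ⁻¹ * 2) ^ 4 * (L * L⁻¹) := by
                rw [h2, ENNReal.mul_inv_cancel hL0 hL]; simp
            _ = _ := by ring
      _ ≤ K * τ * v ^ 7 * (16 * (τ⁻¹ ^ 4 * L⁻¹)) := by grw [h]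
      _ = 16 * K * (v ^ 7 * L⁻¹) * (τ * τ⁻¹) * τ⁻¹ ^ 3 := by ring
      _ = _ := by
          rw [ENNReal.mul_inv_cancel hτ0 hτ, mul_one, ENNReal.rpow_neg, ← ENNReal.inv_pow,
            div_eq_mul_inv]
          norm_cast
  calc ω = ω ^ (1 - κ) * (ω ^ 4) ^ (κ / 4) := by
        rw [← ENNReal.rpow_natCast, ← ENNReal.rpow_mul,
          ← ENNReal.rpow_add_of_nonneg _ _ (by linarith) (by push_cast; linarith),
          show 1 - κ + (4 : ℕ) * (κ / 4) = 1 by push_cast; ring, ENNReal.rpow_one]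
    _ ≤ b ^ (1 - κ) * (16 * K * (v ^ 7 / L) * τ ^ (-3 : ℝ)) ^ (κ / 4) := by
        gcongr
    _ = _ := by
        have hκ4 : 0 ≤ κ / 4 := by linarith
        rw [ENNReal.mul_rpow_of_nonneg _ _ hκ4, ENNReal.mul_rpow_of_nonneg _ _ hκ4,
          ← ENNReal.rpow_mul, show -3 * (κ / 4) = -(3 * κ / 4) by ring]
        ring

variable {Ω : Set (Euc n)} {κ η a r : ℝ}

theorem exists_volume_preimage_Ioc_le (hn : 4 ≤ n) (hκ : 0 < κ) (hκ1 : κ ≤ 1) (hη : 0 < η)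
    (hΩm : MeasurableSet Ω) (hΩ : volume Ω ≠ ∞) :
    ∃ K : ℝ≥0∞, K ≠ ∞ ∧ ∀ {E : Set (Euc n × ℝ)} {v l τ : ℝ≥0∞}, MeasurableSet E →
      volume E ≤ v → v ≠ 0 → v ≠ ∞ → l ≠ 0 → l ≠ ∞ → τ ≠ 0 → τ ≠ ∞ →
      volume.restrict Ω ((fun ξ ↦ volume (Prod.mk ξ ⁻¹' richLines E l)) ⁻¹' Ioc (τ / 2) τ) ≤
        K * (v ^ 7 / l ^ (4 * n + 7 + 16 * η)) ^ (κ / 4) * τ ^ (-(3 * κ / 4)) := by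
  obtain ⟨K, hK, hmain⟩ :=
    exists_volume_pow_four_mul_rpow_le (V := Euc n) (by simpa using hn) hη
  simp only [finrank_euclideanSpace, Fintype.card_fin] at hmain
  refine ⟨volume Ω ^ (1 - κ) * (16 * K) ^ (κ / 4), by finiteness,
    fun {E v l τ} hE hv hv0 hv' hl0 hl hτ0 hτ ↦ ?_⟩
  set m : Euc n → ℝ≥0∞ := fun ξ ↦ volume (Prod.mk ξ ⁻¹' richLines E l)
  have hlevel : MeasurableSet (m ⁻¹' Ioc (τ / 2) τ) :=
    measurable_volume_richLines hE l measurableSet_Ioc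
  rw [Measure.restrict_apply hlevel]
  set D : Set (Euc n) := m ⁻¹' Ioc (τ / 2) τ ∩ Ω
  have hD : MeasurableSet D := hlevel.inter hΩm
  set G : Set (Euc n × Euc n) := Prod.fst ⁻¹' D ∩ richLines E l
  have hG : MeasurableSet G := (measurable_fst hD).inter (measurableSet_richLines hE l)
  have hfibre : ∀ ξ, volume (Prod.mk ξ ⁻¹' G) ≤ τ := fun ξ ↦ by
    by_cases hξ : ξ ∈ D
    · exact (measure_mono (preimage_mono inter_subset_right)).trans hξ.1.2
    · simp [G, preimage_inter, preimage_preimage, hξ]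
  have hlower : volume D * (τ / 2) ≤ volume G :=
    calc volume D * (τ / 2) = ∫⁻ _ in D, τ / 2 := by rw [setLIntegral_const, mul_comm]
      _ ≤ ∫⁻ ξ in D, volume (Prod.mk ξ ⁻¹' G) := setLIntegral_mono' hD fun ξ hξ ↦
          hξ.1.1.le.trans (measure_mono fun x hx ↦ ⟨hξ, hx⟩)
      _ ≤ ∫⁻ ξ, volume (Prod.mk ξ ⁻¹' G) := setLIntegral_le_lintegral _ _
      _ = volume G := by rw [Measure.volume_eq_prod, Measure.prod_apply hG]
  refine le_mul_rpow_of_pow_four_le hκ.le hκ1 (measure_mono inter_subset_right) hτ0 hτ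
    (ENNReal.rpow_pos (pos_iff_ne_zero.2 hl0) hl).ne' (by finiteness) ?_
  grw [hlower]
  exact hmain hE hG hfibre hv hv0 hv' hl0 hl fun g hg ↦
    (xrayT_indicator_one hE g.1 g.2) ▸ hg.2

theorem exists_lintegral_volume_richLines_rpow_le (hn : 4 ≤ n) (hκ : 0 < κ) (hκ1 : κ ≤ 1)
    (hη : 0 < η) (hκa : 3 * κ / 4 < a) (hΩm : MeasurableSet Ω) (hΩ : volume Ω ≠ ∞) :
    ∃ K : ℝ≥0∞, K ≠ ∞ ∧ ∀ {E : Set (Euc n × ℝ)} {v l : ℝ≥0∞}, MeasurableSet E →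
      volume E ≤ v → v ≠ 0 → v ≠ ∞ → l ≠ 0 → l ≠ ∞ →
      ∫⁻ ξ in Ω, volume (Prod.mk ξ ⁻¹' richLines E l) ^ a ≤
        K * v ^ (a + κ) * l ^ (-(a - 3 * κ / 4 + κ * (4 * n + 7 + 16 * η) / 4)) := by
  obtain ⟨K, hK, hlevel⟩ := exists_volume_preimage_Ioc_le hn hκ hκ1 hη hΩm hΩ
  have hgeom := inv_one_sub_inv_two_rpow_ne_top (sub_pos.2 hκa)
  refine ⟨K * (1 - 2⁻¹ ^ (a - 3 * κ / 4))⁻¹, by finiteness,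
    fun {E v l} hE hv hv0 hv' hl0 hl ↦ ?_⟩
  have hκ4 : 0 ≤ κ / 4 := by linarith
  have hlκ : (v ^ 7 / l ^ (4 * n + 7 + 16 * η)) ^ (κ / 4) =
      v ^ (7 * κ / 4) * l ^ (-(κ * (4 * n + 7 + 16 * η) / 4)) := by
    rw [div_eq_mul_inv, ENNReal.mul_rpow_of_nonneg _ _ hκ4, ← ENNReal.rpow_neg,
      ← ENNReal.rpow_natCast, ← ENNReal.rpow_mul, ← ENNReal.rpow_mul]
    ring_nf
  have hX : (v / l) ^ (a - 3 * κ / 4) = v ^ (a - 3 * κ / 4) * l ^ (-(a - 3 * κ / 4)) := by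
    rw [div_eq_mul_inv, ENNReal.mul_rpow_of_nonneg _ _ (sub_pos.2 hκa).le, ENNReal.inv_rpow,
      ENNReal.rpow_neg]
  calc ∫⁻ ξ in Ω, volume (Prod.mk ξ ⁻¹' richLines E l) ^ a
      ≤ K * (v ^ 7 / l ^ (4 * n + 7 + 16 * η)) ^ (κ / 4) *
        ((v / l) ^ (a - 3 * κ / 4) * (1 - 2⁻¹ ^ (a - 3 * κ / 4))⁻¹) :=
        lintegral_rpow_le_of_measure_preimage_Ioc_le (measurable_volume_richLines hE l)
          (ENNReal.div_ne_zero.2 ⟨hv0, hl⟩) (ENNReal.div_ne_top hv' hl0)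
          (fun ξ ↦ (volume_richLines_le hE hl0 hl ξ).trans (by gcongr)) (by linarith) hκa
          fun τ ↦ hlevel hE hv hv0 hv' hl0 hl
    _ = K * (1 - 2⁻¹ ^ (a - 3 * κ / 4))⁻¹ * (v ^ (7 * κ / 4) * v ^ (a - 3 * κ / 4)) *
        (l ^ (-(κ * (4 * n + 7 + 16 * η) / 4)) * l ^ (-(a - 3 * κ / 4))) := by
        rw [hlκ, hX]
        ring
    _ = _ := by
        rw [← ENNReal.rpow_add _ _ hv0 hv', ← ENNReal.rpow_add _ _ hl0 hl]
        ring_nf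

/-- The `q`-th power of the mixed norm, for `a = q / r` and directions in `Ω`. -/
def kakeyaIntegral (r a : ℝ) (Ω : Set (Euc n)) (f : Euc n × ℝ → ℝ≥0∞) : ℝ≥0∞ :=
  ∫⁻ ξ in Ω, (∫⁻ x, xrayT f ξ x ^ r) ^ a

theorem lintegral_xrayT_indicator_rpow_le (hE : MeasurableSet E) (hr : 0 < r) (ξ : Euc n) :
    ∫⁻ x, xrayT (E.indicator 1) ξ x ^ r ≤
      ∑' k : ℕ, (2⁻¹ ^ k) ^ r * volume (Prod.mk ξ ⁻¹' richLines E (2⁻¹ ^ (k + 1))) := by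
  have hxray : Measurable (xrayT (E.indicator 1) ξ) :=
    (measurable_xrayT (measurable_one.indicator hE)).comp measurable_prodMk_left
  refine (lintegral_rpow_le_tsum_measure_preimage_Ioc hxray one_ne_top
    (xrayT_indicator_one_le_one E ξ) hr).trans ?_
  simp only [one_mul]
  gcongr with k
  exact fun x hx ↦ hx.1.le

theorem kakeyaIntegral_indicator_le_tsum (hE : MeasurableSet E) (hr : 0 < r) (ha : 0 < a)
    (ha1 : a ≤ 1) :
    kakeyaIntegral r a Ω (E.indicator 1) ≤ ∑' k : ℕ, ((2⁻¹ ^ k) ^ r) ^ a *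
      ∫⁻ ξ in Ω, volume (Prod.mk ξ ⁻¹' richLines E (2⁻¹ ^ (k + 1))) ^ a := by
  have hmeas (k : ℕ) : Measurable fun ξ ↦
      volume (Prod.mk ξ ⁻¹' richLines E (2⁻¹ ^ (k + 1))) ^ a :=
    (measurable_volume_richLines hE _).pow_const a
  simp_rw [← lintegral_const_mul _ (hmeas _)]
  rw [← lintegral_tsum fun k ↦ ((hmeas k).const_mul _).aemeasurable]
  refine lintegral_mono fun ξ ↦
    (ENNReal.rpow_le_rpow (lintegral_xrayT_indicator_rpow_le hE hr ξ) ha.le).trans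
      ((rpow_tsum_le_tsum_rpow _ ha ha1).trans_eq ?_)
  simp only [ENNReal.mul_rpow_of_nonneg _ _ ha.le]

theorem exists_kakeyaIntegral_indicator_le (hn : 4 ≤ n) (hκ : 0 < κ) (hκ1 : κ ≤ 1)
    (hη : 0 < η) (hκa : 3 * κ / 4 < a) (ha1 : a ≤ 1)
    (hr : a - 3 * κ / 4 + κ * (4 * n + 7 + 16 * η) / 4 < r * a)
    (hΩm : MeasurableSet Ω) (hΩ : volume Ω ≠ ∞) :
    ∃ K : ℝ≥0∞, K ≠ ∞ ∧ ∀ {E : Set (Euc n × ℝ)} {v : ℝ≥0∞}, MeasurableSet E →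
      volume E ≤ v → v ≠ 0 → v ≠ ∞ →
      kakeyaIntegral r a Ω (E.indicator 1) ≤ K * v ^ (a + κ) := by
  obtain ⟨K, hK, hrich⟩ := exists_lintegral_volume_richLines_rpow_le hn hκ hκ1 hη hκa hΩm hΩ
  set σ := a - 3 * κ / 4 + κ * (4 * n + 7 + 16 * η) / 4 with hσ
  have ha : 0 < a := by linarith
  have hσ0 : 0 < σ := by
    have : 0 ≤ κ * (4 * n + 7 + 16 * η) / 4 := by positivity
    linarith
  have hr0 : 0 < r := pos_of_mul_pos_left (hσ0.trans hr) ha.le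
  have hgeom := inv_one_sub_inv_two_rpow_ne_top (sub_pos.2 hr)
  refine ⟨K * 2 ^ σ * (1 - 2⁻¹ ^ (r * a - σ))⁻¹, by finiteness, fun {E v} hE hv hv0 hv' ↦ ?_⟩
  have hterm (k : ℕ) : ((2⁻¹ ^ k) ^ r) ^ a *
      ∫⁻ ξ in Ω, volume (Prod.mk ξ ⁻¹' richLines E (2⁻¹ ^ (k + 1))) ^ a ≤
        K * v ^ (a + κ) * 2 ^ σ * (1 * 2⁻¹ ^ k) ^ (r * a - σ) := by
    have hk0 : (2⁻¹ : ℝ≥0∞) ^ k ≠ 0 := by simp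
    have hk : (2⁻¹ : ℝ≥0∞) ^ k ≠ ∞ := by finiteness
    have hsucc : ((2⁻¹ : ℝ≥0∞) ^ (k + 1)) ^ (-σ) = (2⁻¹ ^ k) ^ (-σ) * 2 ^ σ := by
      rw [pow_succ, ENNReal.mul_rpow_of_ne_top hk (by finiteness), ENNReal.inv_rpow _ (-σ),
        ENNReal.rpow_neg 2, inv_inv]
    grw [hrich hE hv hv0 hv' (by simp) (by finiteness), hsucc]
    rw [one_mul, sub_eq_add_neg, ENNReal.rpow_add _ _ hk0 hk, ENNReal.rpow_mul]
    exact le_of_eq (by ring)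
  calc kakeyaIntegral r a Ω (E.indicator 1)
      ≤ ∑' k : ℕ, K * v ^ (a + κ) * 2 ^ σ * (1 * 2⁻¹ ^ k) ^ (r * a - σ) :=
        (kakeyaIntegral_indicator_le_tsum hE hr0 ha ha1).trans (ENNReal.tsum_le_tsum hterm)
    _ = _ := by
        rw [ENNReal.tsum_mul_left, tsum_mul_inv_two_pow_rpow _ (sub_pos.2 hr).le,
          ENNReal.one_rpow]
        ring

theorem kakeyaIntegral_indicator_le (hE : MeasurableSet E) (hr : 1 ≤ r) (ha : 0 ≤ a) :
    kakeyaIntegral r a Ω (E.indicator 1) ≤ volume Ω * volume E ^ a := by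
  have hinner (ξ : Euc n) : ∫⁻ x, xrayT (E.indicator 1) ξ x ^ r ≤ volume E :=
    calc ∫⁻ x, xrayT (E.indicator 1) ξ x ^ r ≤ ∫⁻ x, xrayT (E.indicator 1) ξ x :=
          lintegral_mono fun x ↦
            ENNReal.rpow_le_self_of_le_one (xrayT_indicator_one_le_one E ξ x) hr
      _ ≤ volume E := by
          grw [lintegral_xrayT_le (measurable_one.indicator hE), lintegral_indicator_one hE]
  calc kakeyaIntegral r a Ω (E.indicator 1) ≤ ∫⁻ _ in Ω, volume E ^ a :=
        lintegral_mono fun ξ ↦ ENNReal.rpow_le_rpow (hinner ξ) ha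
    _ = volume Ω * volume E ^ a := by rw [setLIntegral_const, mul_comm]

/-! ### Summation over the level sets -/

theorem kakeyaIntegral_const_mul {c : ℝ≥0∞} (hc : c ≠ ∞) (hr : 0 ≤ r) (ha : 0 ≤ a)
    (f : Euc n × ℝ → ℝ≥0∞) :
    kakeyaIntegral r a Ω (fun z ↦ c * f z) = c ^ (r * a) * kakeyaIntegral r a Ω f := by
  have hinner (ξ : Euc n) : (∫⁻ x, xrayT (fun z ↦ c * f z) ξ x ^ r) ^ a =
      c ^ (r * a) * (∫⁻ x, xrayT f ξ x ^ r) ^ a := by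
    simp only [xrayT_const_mul hc, ENNReal.mul_rpow_of_nonneg _ _ hr]
    rw [lintegral_const_mul' _ _ (by finiteness), ENNReal.mul_rpow_of_nonneg _ _ ha,
      ENNReal.rpow_mul]
  have hc' : c ^ (r * a) ≠ ∞ := ENNReal.rpow_ne_top_of_nonneg (mul_nonneg hr ha) hc
  simp only [kakeyaIntegral, hinner]
  exact lintegral_const_mul' _ _ hc'

theorem kakeyaIntegral_le_mul_tsum {ι : Type*} [Countable ι] {w : ι → ℝ≥0∞}
    (hw : ∀ i, w i ≠ 0) (hw' : ∀ i, w i ≠ ∞) {f : Euc n × ℝ → ℝ≥0∞}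
    {F : ι → Euc n × ℝ → ℝ≥0∞} (hF : ∀ i, Measurable (F i)) (hfF : ∀ z, f z ≤ ∑' i, F i z)
    (hr : 0 < r) (ha : 0 < a) (ha1 : a ≤ 1) :
    kakeyaIntegral r a Ω f ≤
      ((∑' i, (w i)⁻¹) ^ r) ^ a * ∑' i, w i ^ (r * a) * kakeyaIntegral r a Ω (F i) := by
  have hxray (ξ x : Euc n) : xrayT f ξ x ≤ ∑' i, xrayT (F i) ξ x := by
    unfold xrayT
    rw [← lintegral_tsum fun i ↦ by fun_prop]
    exact lintegral_mono fun t ↦ hfF _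
  have hinner (ξ : Euc n) : ∫⁻ x, xrayT f ξ x ^ r ≤
      (∑' i, (w i)⁻¹) ^ r * ∑' i, w i ^ r * ∫⁻ x, xrayT (F i) ξ x ^ r :=
    calc ∫⁻ x, xrayT f ξ x ^ r
        ≤ ∫⁻ x, (∑' i, (w i)⁻¹) ^ r * ∑' i, w i ^ r * xrayT (F i) ξ x ^ r := by
          refine lintegral_mono fun x ↦ ?_
          grw [hxray, rpow_tsum_le_mul_tsum hw hw' _ hr]
          simp only [ENNReal.mul_rpow_of_nonneg _ _ hr.le, le_refl]
      _ = _ := by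
          rw [lintegral_const_mul _ (by fun_prop), lintegral_tsum fun i ↦ by fun_prop]
          exact congrArg _ (tsum_congr fun i ↦ lintegral_const_mul _ (by fun_prop))
  calc kakeyaIntegral r a Ω f
      ≤ ∫⁻ ξ in Ω, ((∑' i, (w i)⁻¹) ^ r) ^ a *
          ∑' i, w i ^ (r * a) * (∫⁻ x, xrayT (F i) ξ x ^ r) ^ a := by
        refine lintegral_mono fun ξ ↦ ?_
        grw [hinner ξ, ENNReal.mul_rpow_of_nonneg _ _ ha.le, rpow_tsum_le_tsum_rpow _ ha ha1]
        simp only [ENNReal.mul_rpow_of_nonneg _ _ ha.le, ENNReal.rpow_mul, le_refl]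
    _ = _ := by
        rw [lintegral_const_mul _ (by fun_prop), lintegral_tsum fun i ↦ by fun_prop]
        exact congrArg _ (tsum_congr fun i ↦ lintegral_const_mul _ (by fun_prop))

theorem exists_kakeyaIntegral_le_of_indicator_le {δ : ℝ} (hr : 0 < r) (ha : 0 < a) (ha1 : a ≤ 1)
    (hδ : 0 < δ) :
    ∃ A : ℝ≥0∞, A ≠ ∞ ∧ ∀ {f : Euc n × ℝ → ℝ≥0∞} {K : ℝ≥0∞}, Measurable f →
      (∀ k : ℤ, kakeyaIntegral r a Ω ({z | 2 ^ (k : ℝ) ≤ f z}.indicator 1) ≤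
        K * (2 ^ (-k - 2 * δ * |(k : ℝ)|)) ^ (r * a)) →
      kakeyaIntegral r a Ω f ≤ A * K := by
  have hra : 0 < r * a := mul_pos hr ha
  have hsum := tsum_two_rpow_neg_mul_abs_ne_top hδ
  have hsum' := tsum_two_rpow_neg_mul_abs_ne_top (mul_pos hra hδ)
  refine ⟨((∑' k : ℤ, 2 ^ (-(δ * |(k : ℝ)|))) ^ r) ^ a *
    (2 ^ (r * a) * ∑' k : ℤ, 2 ^ (-(r * a * δ * |(k : ℝ)|))), by finiteness,
    fun {f K} hf hlevel ↦ ?_⟩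
  have hE (k : ℤ) : MeasurableSet {z | 2 ^ (k : ℝ) ≤ f z} := measurableSet_le measurable_const hf
  have hexp (k : ℝ) : (2 : ℝ≥0∞) ^ (δ * |k|) * 2 ^ (k + 1) * 2 ^ (-k - 2 * δ * |k|) =
      2 * 2 ^ (-(δ * |k|)) := by
    nth_rw 4 [← ENNReal.rpow_one 2]
    simp only [← ENNReal.rpow_add _ _ two_ne_zero ofNat_ne_top]
    ring_nf
  have hterm (k : ℤ) : (2 ^ (δ * |(k : ℝ)|)) ^ (r * a) * kakeyaIntegral r a Ω
        (fun z ↦ 2 ^ ((k : ℝ) + 1) * {z | 2 ^ (k : ℝ) ≤ f z}.indicator 1 z) ≤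
      K * (2 * 2 ^ (-(δ * |(k : ℝ)|))) ^ (r * a) := by
    rw [kakeyaIntegral_const_mul (by finiteness) hr.le ha.le, ← hexp]
    grw [hlevel k]
    simp only [ENNReal.mul_rpow_of_nonneg _ _ hra.le]
    exact le_of_eq (by ring)
  calc kakeyaIntegral r a Ω f
      ≤ ((∑' k : ℤ, (2 ^ (δ * |(k : ℝ)|))⁻¹) ^ r) ^ a *
        ∑' k : ℤ, (2 ^ (δ * |(k : ℝ)|)) ^ (r * a) * kakeyaIntegral r a Ω
          (fun z ↦ 2 ^ ((k : ℝ) + 1) * {z | 2 ^ (k : ℝ) ≤ f z}.indicator 1 z) :=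
        kakeyaIntegral_le_mul_tsum (fun k ↦ by simp) (fun k ↦ by finiteness)
          (fun k ↦ (measurable_one.indicator (hE k)).const_mul _)
          (le_tsum_two_rpow_mul_indicator f) hr ha ha1
    _ ≤ ((∑' k : ℤ, (2 ^ (δ * |(k : ℝ)|))⁻¹) ^ r) ^ a *
        ∑' k : ℤ, K * (2 * 2 ^ (-(δ * |(k : ℝ)|))) ^ (r * a) :=
        mul_le_mul_right (ENNReal.tsum_le_tsum hterm) _
    _ = _ := by
        simp only [ENNReal.mul_rpow_of_nonneg _ _ hra.le, ← ENNReal.rpow_mul,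
          ← ENNReal.rpow_neg, ENNReal.tsum_mul_left]
        ring_nf

theorem volume_superlevel_le {α : Type*} [MeasureSpace α] {f : α → ℝ≥0∞} (hf : Measurable f)
    {p : ℝ} (hp : 0 < p) (hfp : ∫⁻ x, f x ^ p ≤ 1) (s : ℝ) :
    volume {x | 2 ^ s ≤ f x} ≤ 2 ^ (-(p * s)) := by
  have hset : {x | 2 ^ s ≤ f x} = {x | (2 ^ s) ^ p ≤ f x ^ p} := by
    simp only [ENNReal.rpow_le_rpow_iff hp]
  calc volume {x | 2 ^ s ≤ f x} ≤ (∫⁻ x, f x ^ p) / (2 ^ s) ^ p :=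
        hset ▸ meas_ge_le_lintegral_div (hf.pow_const p).aemeasurable (by simp) (by finiteness)
    _ ≤ 1 / (2 ^ s) ^ p := by gcongr
    _ = 2 ^ (-(p * s)) := by rw [one_div, ENNReal.rpow_neg, mul_comm p, ENNReal.rpow_mul]

theorem kakeyaIntegral_indicator_superlevel_le {p δ : ℝ} {K : ℝ≥0∞} {f : Euc n × ℝ → ℝ≥0∞}
    (hf : Measurable f) (hp : 0 < p) (hfp : ∫⁻ z, f z ^ p ≤ 1) (hr : 1 ≤ r) (ha : 0 ≤ a)
    (hκ : (1 + 2 * δ) * (r * a) ≤ p * (a + κ)) (hδ : p * a ≤ (1 - 2 * δ) * (r * a))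
    (hK : ∀ {E : Set (Euc n × ℝ)} {v : ℝ≥0∞}, MeasurableSet E → volume E ≤ v → v ≠ 0 → v ≠ ∞ →
      kakeyaIntegral r a Ω (E.indicator 1) ≤ K * v ^ (a + κ)) (s : ℝ) :
    kakeyaIntegral r a Ω ({z | 2 ^ s ≤ f z}.indicator 1) ≤
      (K + volume Ω) * (2 ^ (-s - 2 * δ * |s|)) ^ (r * a) := by
  have hE : MeasurableSet {z | 2 ^ s ≤ f z} := measurableSet_le measurable_const hf
  have hvol := volume_superlevel_le hf hp hfp s
  rcases le_total 0 s with hs | hs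
  · refine (hK hE hvol (by simp) (by finiteness)).trans (mul_le_mul' le_self_add ?_)
    rw [← ENNReal.rpow_mul, ← ENNReal.rpow_mul, abs_of_nonneg hs]
    exact ENNReal.rpow_le_rpow_of_exponent_le one_le_two
      (by linarith [mul_le_mul_of_nonneg_right hκ hs])
  · refine (kakeyaIntegral_indicator_le hE hr ha).trans (mul_le_mul' le_add_self ?_)
    grw [hvol]
    rw [← ENNReal.rpow_mul, ← ENNReal.rpow_mul, abs_of_nonpos hs]
    exact ENNReal.rpow_le_rpow_of_exponent_le one_le_two
      (by linarith [mul_le_mul_of_nonpos_right hδ hs])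

theorem exists_kakeyaIntegral_le {p : ℝ} (hn : 4 ≤ n) (hκ : 0 < κ) (hκ1 : κ ≤ 1) (hη : 0 < η)
    (hκa : 3 * κ / 4 < a) (ha1 : a ≤ 1)
    (hr : a - 3 * κ / 4 + κ * (4 * n + 7 + 16 * η) / 4 < r * a) (hp : 0 < p) (hpr : p < r)
    (hpκ : r * a < p * (a + κ)) (hΩm : MeasurableSet Ω) (hΩ : volume Ω ≠ ∞) :
    ∃ K : ℝ≥0∞, K ≠ ∞ ∧ ∀ f : Euc n × ℝ → ℝ≥0∞, Measurable f → ∫⁻ z, f z ^ p ≤ 1 →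
      kakeyaIntegral r a Ω f ≤ K := by
  have ha : 0 < a := by linarith
  have hr1 : 1 < r := by
    have : 0 < κ * (4 * n + 4 + 16 * η) / 4 := by positivity
    exact one_lt_of_lt_mul_left₀ ha.le (by linarith)
  have : 0 < r * a := by positivity
  have hpra : p * a < r * a := by gcongr
  obtain ⟨ε, hε, hεmin⟩ := exists_between (lt_min (sub_pos.2 hpκ) (sub_pos.2 hpra))
  have hε1 := hεmin.le.trans (min_le_left _ _)
  have hε2 := hεmin.le.trans (min_le_right _ _)
  set δ := ε / (2 * (r * a))
  have hδ : 2 * δ * (r * a) = ε := by simp only [δ]; field_simp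
  obtain ⟨A, hA, hsum⟩ := exists_kakeyaIntegral_le_of_indicator_le (Ω := Ω)
    (zero_lt_one.trans hr1) ha ha1 (show 0 < δ by positivity)
  obtain ⟨K, hK, hrestricted⟩ :=
    exists_kakeyaIntegral_indicator_le hn hκ hκ1 hη hκa ha1 hr hΩm hΩ
  refine ⟨A * (K + volume Ω), by finiteness, fun f hf hfp ↦ hsum hf fun k ↦ ?_⟩
  exact kakeyaIntegral_indicator_superlevel_le hf hp hfp hr1.le ha.le (by linarith)
    (by linarith) hrestricted k

/-! ### Strong-type estimates -/

theorem kakeyaMixedNorm_const_mul {c : ℝ≥0∞} (hc : c ≠ ∞) {q r : ℝ} (hq : 0 < q) (hr : 0 < r)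
    (C : ℝ) (f : Euc n × ℝ → ℝ≥0∞) :
    kakeyaMixedNorm q r C (fun z ↦ c * f z) = c * kakeyaMixedNorm q r C f := by
  calc kakeyaMixedNorm q r C (fun z ↦ c * f z)
      = (c ^ (r * (q / r)) * kakeyaIntegral r (q / r) (Metric.ball 0 C) f) ^ (1 / q) := by
        rw [← kakeyaIntegral_const_mul hc hr.le (by positivity)]
        rfl
    _ = c * kakeyaMixedNorm q r C f := by
        rw [mul_div_cancel₀ _ hr.ne', ENNReal.mul_rpow_of_nonneg _ _ (by positivity),
          ← ENNReal.rpow_mul, mul_one_div_cancel hq.ne', ENNReal.rpow_one]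
        rfl

theorem kakeyaMixedNorm_le_mul_lpNorm {p q r C : ℝ} {K : ℝ≥0∞} (hp : 0 < p) (hq : 0 < q)
    (hr : 0 < r) (hK0 : K ≠ 0) (hK : K ≠ ∞)
    (h : ∀ f : Euc n × ℝ → ℝ≥0∞, Measurable f → ∫⁻ z, f z ^ p ≤ 1 → kakeyaMixedNorm q r C f ≤ K)
    {f : Euc n × ℝ → ℝ≥0∞} (hf : Measurable f) :
    kakeyaMixedNorm q r C f ≤ K * _root_.lpNorm p f := by
  rw [mul_comm, ← ENNReal.div_le_iff hK0 hK]
  refine le_of_forall_gt_imp_ge_of_dense fun s hs ↦ ?_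
  rcases eq_or_ne s ∞ with rfl | hs'
  · exact le_top
  have hs0 : s ≠ 0 := hs.ne_bot
  have hlp : ∫⁻ z, (s⁻¹ * f z) ^ p ≤ 1 := by
    have hfs : ∫⁻ z, f z ^ p ≤ s ^ p := by
      rw [← ENNReal.rpow_inv_le_iff hp, ← one_div]
      exact hs.le
    simp only [ENNReal.mul_rpow_of_nonneg _ _ hp.le]
    rw [lintegral_const_mul' _ _ (by finiteness), ENNReal.inv_rpow]
    grw [hfs]
    exact ENNReal.inv_mul_le_one _
  have hscale : (fun z ↦ s * (s⁻¹ * f z)) = f := by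
    simp only [ENNReal.mul_inv_cancel_left hs0 hs']
  rw [ENNReal.div_le_iff hK0 hK]
  calc kakeyaMixedNorm q r C f = s * kakeyaMixedNorm q r C fun z ↦ s⁻¹ * f z := by
        rw [← kakeyaMixedNorm_const_mul hs' hq hr, hscale]
    _ ≤ s * K := by grw [h _ (hf.const_mul _) hlp]

theorem exists_interpolation_parameters {p q r : ℝ} (hp : 0 < p) (hq : 0 < q) (hpr : p < r)
    (hpqr : 1 / p - 1 / r < 1 / q) (hrp : 3 * r < 7 * p) (hscale : (n + 1) / p < 1 + n / r) :
    ∃ κ η : ℝ, 0 < κ ∧ κ ≤ 1 ∧ 0 < η ∧ 3 * κ / 4 < q / r ∧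
      q / r - 3 * κ / 4 + κ * (4 * n + 7 + 16 * η) / 4 < r * (q / r) ∧
      r * (q / r) < p * (q / r + κ) := by
  have hr : 0 < r := hp.trans hpr
  have hpos : 0 < q / p - q / r := sub_pos.2 (by gcongr)
  have hone : q / p - q / r < 1 := by
    have := mul_lt_mul_of_pos_left hpqr hq
    field_simp at this ⊢
    linarith
  have htwo : q / p - q / r < 4 * (q / r) / 3 := by
    field_simp
    linarith
  have hthree : q / p - q / r < (q - q / r) / (n + 1) := by
    rw [lt_div_iff₀ (by positivity)]
    have := mul_lt_mul_of_pos_left hscale hq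
    field_simp at this ⊢
    linarith
  obtain ⟨κ, hκ, hκ'⟩ := exists_between (lt_min hone (lt_min htwo hthree))
  simp only [lt_min_iff] at hκ'
  obtain ⟨hκ1, hκ2, hκ3⟩ := hκ'
  have hκ0 : 0 < κ := hpos.trans hκ
  rw [lt_div_iff₀ (by positivity)] at hκ3
  have hrq : r * (q / r) = q := mul_div_cancel₀ _ hr.ne'
  rw [hrq]
  refine ⟨κ, (q - q / r - κ * (n + 1)) / (8 * κ), hκ0, hκ1.le,
    div_pos (by linarith) (by linarith), by linarith, ?_, ?_⟩
  · have : κ * (16 * ((q - q / r - κ * (n + 1)) / (8 * κ))) = 2 * (q - q / r - κ * (n + 1)) := by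
      field_simp
      ring
    linarith
  · rw [sub_lt_iff_lt_add', div_lt_iff₀' hp] at hκ
    exact hκ

end XRay

theorem statement0_general {n : ℕ} (hn : 4 ≤ n) {p q r : ℝ} (hp : 0 < p) (hq : 0 < q) (hpr : p < r)
    (hqr : q ≤ r) (hpqr : 1 / p - 1 / r < 1 / q) (hrp : 3 * r < 7 * p)
    (hscale : (n + 1) / p < 1 + n / r) (C : ℝ) :
    ∃ A : ℝ, 0 < A ∧ ∀ f : Euc n × ℝ → ℝ≥0∞, Measurable f →
      kakeyaMixedNorm q r C f ≤ ENNReal.ofReal A * _root_.lpNorm p f := by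
  have hr : 0 < r := hp.trans hpr
  obtain ⟨κ, η, hκ, hκ1, hη, hκa, hηr, hpκ⟩ :=
    exists_interpolation_parameters hp hq hpr hpqr hrp hscale
  obtain ⟨K, hK, hbound⟩ := exists_kakeyaIntegral_le hn hκ hκ1 hη hκa
    ((div_le_one hr).2 hqr) hηr hp hpr hpκ Metric.isOpen_ball.measurableSet
    (measure_ball_lt_top (x := (0 : Euc n)) (r := C)).ne
  have hKq : K ^ (1 / q) + 1 ≠ ∞ := by finiteness
  refine ⟨(K ^ (1 / q) + 1).toReal, ENNReal.toReal_pos (by simp) hKq, fun f hf ↦ ?_⟩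
  rw [ENNReal.ofReal_toReal hKq]
  refine kakeyaMixedNorm_le_mul_lpNorm hp hq hr (by simp) hKq (fun g hg hgp ↦ ?_) hf
  exact (ENNReal.rpow_le_rpow (hbound g hg hgp) (by positivity)).trans le_self_add

theorem exponent_inequalities {n p q r : ℝ} (hn : 0 < n) (hp : p = (4 * n + 7) / 7) (hq : 0 < q)
    (hr : 0 < r) (hqp : 4 * q < 7 * p) (hrp : 3 * r < 7 * p) :
    1 / p - 1 / r < 1 / q ∧ (n + 1) / p < 1 + n / r := by
  have hp0 : 0 < p := by linarith
  have hq' : 4 / (7 * p) < 1 / q := by rwa [div_lt_div_iff₀ (by positivity) hq, one_mul]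
  have hr' : 3 / (7 * p) < 1 / r := by rwa [div_lt_div_iff₀ (by positivity) hr, one_mul]
  constructor
  · have hpinv : 1 / p = 4 / (7 * p) + 3 / (7 * p) := by
      field_simp
      norm_num
    linarith
  · calc (n + 1) / p = 1 + n * (3 / (7 * p)) := by
          rw [hp]
          field_simp
          ring
      _ < 1 + n * (1 / r) := by gcongr
      _ = 1 + n / r := by rw [mul_one_div]

/-- Theorem 1: for `d ≥ 6`, `(p,q,r) = ((4d+3)/7, (4d+3)/4 - ε, (4d+3)/3 - ε)`,
the Kakeya-order mixed norm bound `‖T[f]‖_{L^q(L^r),K} ≲ ‖f‖_{L^p(ℝ^d)}` holds. -/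
theorem statement0 (d : ℕ) (hd : 6 ≤ d) (ε : ℝ) (hε : ε ∈ Set.Ioo (0:ℝ) 1)
    (p q r : ℝ) (hp : p = (4 * (d:ℝ) + 3) / 7) (hq : q = (4 * (d:ℝ) + 3) / 4 - ε)
    (hr : r = (4 * (d:ℝ) + 3) / 3 - ε) (C : ℝ) (hC : 0 < C) :
    ∃ A : ℝ, 0 < A ∧ ∀ f : Euc (d - 1) × ℝ → ℝ≥0∞, Measurable f →
      kakeyaMixedNorm q r C f ≤ ENNReal.ofReal A * lpNorm p f := by
  obtain ⟨n, rfl⟩ : ∃ n, d = n + 1 := ⟨d - 1, by omega⟩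
  obtain ⟨hε0, hε1⟩ := hε
  have hn : (5 : ℝ) ≤ n := by exact_mod_cast (by omega : 5 ≤ n)
  push_cast at hp hq hr
  have hp0 : 0 < p := by linarith
  have hq0 : 0 < q := by linarith
  have hr0 : 0 < r := by linarith
  obtain ⟨hpqr, hscale⟩ := exponent_inequalities (n := n) (p := p) (q := q) (r := r)
    (by linarith) (by linarith) hq0 hr0 (by linarith) (by linarith)
  rw [Nat.add_sub_cancel]
  exact statement0_general (by omega) hp0 hq0 (by linarith) (by linarith) hpqr (by linarith)
    hscale C

end
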